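/- arXiv:math/0702749 — 4 statements merged into one kernel-verified Lean document; each statement's English description precedes it below -/
import Mathlib

section
/- Let 𝒪 = 𝓞_K be the ring of integers of a number field K and let n ≥ 3. Let T be a simplicial tree and let X be a metric space admitting a quasi-isometry to T. Then every action of SL(n, 𝓞_K) by isometries on X has a bounded orbit; that is, for every such action and every x ∈ X, the set {g·x : g ∈ SL(n,𝓞_K)} is bounded. -/
open NumberField

/-!
An isometric action on a quasi-tree yields a group seminorm `l` (displacement in a Rips graph) which
is hyperbolic and for which every coarse path passes near the midpoint of its endpoints. If every
element has zero translation length, hyperbolicity gives `l (g * h) ≤ max (l g) (l h) + O(1)`;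
splitting a long product of generators near its midpoint then shows that `l` is bounded on any
finitely generated group of such elements.

An element whose powers `g ^ (m * m)` are commutators of `m`-th powers, such as a transvection in
`SL(3, R)`, has zero translation length. As `R` is a finitely generated abelian group, `l` is
bounded on transvections. Mennicke symbol identities then show that the elements of `SL(2, R)`
inside `SL(3, R)` have zero translation length too, and `l` is bounded on `SL(2, R)` because this
group is finitely generated. Finally the stable range condition writes every matrix of
`SL(k + 1, R)` as a product of a matrix of `SL(k, R)` and boundedly many transvections.
-/

/-! ### Quasi-tree seminorms -/

/-- The seminorm `l` satisfies Gromov's four-point inequality with defect `η`, evaluated at the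
points `1`, `x`, `x * y`, `x * y * z` of the left-invariant pseudometric `l (g⁻¹ * h)`. -/
def FourPoint {G : Type*} [Group G] (l : GroupSeminorm G) (η : ℝ) : Prop :=
  ∀ x y z : G, l (x * y) + l (y * z) ≤ max (l x + l z) (l (x * y * z) + l y) + η

/-- A group seminorm that behaves like the displacement `g ↦ d(x, g x)` of an isometric action on
a quasi-tree: it is Gromov hyperbolic, and every coarse path (a product of elements of bounded
seminorm) passes near the midpoint of its endpoints. -/
structure IsQuasiTreeSeminorm {G : Type*} [Group G] (l : GroupSeminorm G) : Prop where
  fourPoint : ∃ η, FourPoint l η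
  exists_midpoint : ∀ s : ℝ, ∃ B : ℝ, ∀ L : List G, (∀ g ∈ L, l g ≤ s) →
    ∃ L₁ L₂, L = L₁ ++ L₂ ∧ l L₁.prod ≤ l L.prod / 2 + B ∧ l L₂.prod ≤ l L.prod / 2 + B

/-- The stable translation length `lim l (g ^ k) / k` vanishes; by subadditivity the limit is an
infimum. -/
def HasZeroTranslationLength {G : Type*} [Group G] (l : GroupSeminorm G) (g : G) : Prop :=
  ∀ ε > 0, ∃ k : ℕ, 1 ≤ k ∧ l (g ^ k) < ε * k

section ZeroTranslationLength

open scoped commutatorElement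

variable {G H : Type*} [Group G] [Group H] {l : GroupSeminorm G} {η : ℝ}

theorem FourPoint.nonneg (h : FourPoint l η) : 0 ≤ η := by
  simpa using h 1 1 1

theorem FourPoint.comp (h : FourPoint l η) (f : H →* G) : FourPoint (l.comp f) η :=
  fun x y z => by simpa using h (f x) (f y) (f z)

theorem IsQuasiTreeSeminorm.comp (hl : IsQuasiTreeSeminorm l) (f : H →* G) :
    IsQuasiTreeSeminorm (l.comp f) where
  fourPoint := hl.fourPoint.imp fun _ h => h.comp f
  exists_midpoint s := by
    obtain ⟨B, hB⟩ := hl.exists_midpoint s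
    refine ⟨B, fun L hL => ?_⟩
    obtain ⟨L₁, L₂, hmap, h₁, h₂⟩ := hB (L.map f) (by simpa using hL)
    obtain ⟨M₁, M₂, rfl, rfl, rfl⟩ := List.map_eq_append_iff.1 hmap
    exact ⟨M₁, M₂, rfl, by simpa [← map_list_prod] using h₁, by simpa [← map_list_prod] using h₂⟩

theorem hasZeroTranslationLength_comp_iff {f : H →* G} {h : H} :
    HasZeroTranslationLength (l.comp f) h ↔ HasZeroTranslationLength l (f h) := by
  simp only [HasZeroTranslationLength, GroupSeminorm.comp_apply, map_pow]

theorem seminorm_pow_le (l : GroupSeminorm G) (g : G) (m : ℕ) : l (g ^ m) ≤ m * l g := by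
  induction m with
  | zero => simp
  | succ m ih =>
    have := map_mul_le_add l (g ^ m) g
    push_cast
    rw [pow_succ]
    linarith

theorem seminorm_commutatorElement_le (l : GroupSeminorm G) (g h : G) :
    l ⁅g, h⁆ ≤ 2 * (l g + l h) := by
  have h₁ := map_mul_le_add l (g * h * g⁻¹) h⁻¹
  have h₂ := map_mul_le_add l (g * h) g⁻¹
  have h₃ := map_mul_le_add l g h
  rw [map_inv_eq_map] at h₁ h₂
  rw [commutatorElement_def]
  linarith

theorem hasZeroTranslationLength_of_bounded_pow {g : G} {N : ℕ} {C : ℝ} (hN : 1 ≤ N)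
    (hC : ∀ k, l (g ^ (N * k)) ≤ C) : HasZeroTranslationLength l g := by
  intro ε hε
  obtain ⟨k, hk⟩ := exists_nat_gt (max C 0 / ε)
  have hCk : max C 0 < ε * k := (div_lt_iff₀' hε).1 hk
  have hk0 : (0 : ℝ) < k := pos_of_mul_pos_right ((le_max_right C 0).trans_lt hCk) hε.le
  refine ⟨N * k, Nat.mul_pos hN (by exact_mod_cast hk0), ?_⟩
  calc l (g ^ (N * k)) ≤ max C 0 := (hC k).trans (le_max_left _ _)
    _ < ε * k := hCk
    _ ≤ ε * (N * k : ℕ) := by gcongr; exact Nat.le_mul_of_pos_left k hN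

/-- Distorted elements: a power of exponent `m * m` costs only `O(m)`. -/
theorem hasZeroTranslationLength_of_pow_eq_commutatorElement {g x y : G}
    (h : ∀ m : ℕ, g ^ (m * m) = ⁅x ^ m, y ^ m⁆) : HasZeroTranslationLength l g := by
  intro ε hε
  obtain ⟨m, hm⟩ := exists_nat_gt (2 * (l x + l y) / ε)
  have hm' : 2 * (l x + l y) < ε * m := (div_lt_iff₀' hε).1 hm
  have hm0 : (0 : ℝ) < m := by
    refine pos_of_mul_pos_right (lt_of_le_of_lt ?_ hm') hε.le
    linarith [apply_nonneg l x, apply_nonneg l y]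
  refine ⟨m * m, Nat.mul_pos (by exact_mod_cast hm0) (by exact_mod_cast hm0), ?_⟩
  calc l (g ^ (m * m)) ≤ 2 * (l (x ^ m) + l (y ^ m)) := h m ▸ seminorm_commutatorElement_le l _ _
    _ ≤ 2 * (m * l x + m * l y) := by gcongr <;> exact seminorm_pow_le l _ m
    _ = 2 * (l x + l y) * m := by ring
    _ < ε * m * m := by gcongr
    _ = ε * (m * m : ℕ) := by push_cast; ring

namespace FourPoint

theorem sq_le (h : FourPoint l η) {g : G} (hg : HasZeroTranslationLength l g) :
    l (g * g) ≤ l g + η := by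
  by_contra! hlt
  set c := l (g * g) - l g - η
  have increment (k : ℕ) : l (g ^ k) + c ≤ l (g ^ (k + 1)) := by
    induction k with
    | zero =>
      rw [pow_zero, zero_add, pow_one, map_one_eq_zero]
      linarith [map_mul_le_add l g g, h.nonneg]
    | succ k ih =>
      have := h g g (g ^ k)
      rw [← pow_succ', mul_assoc, ← pow_succ', ← pow_succ'] at this
      rcases le_total (l g + l (g ^ k)) (l (g ^ (k + 1 + 1)) + l g) with hle | hle
      · rw [max_eq_right hle] at this; linarith
      · rw [max_eq_left hle] at this; linarith
  have growth (k : ℕ) : c * k ≤ l (g ^ k) := by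
    induction k with
    | zero => simp
    | succ k ih => push_cast; linarith [increment k]
  obtain ⟨k, -, hk⟩ := hg c (by linarith)
  exact (growth k).not_gt hk

/-- The inequality is applied to `(g * h, g, h)`, `(g, h, g)`, `(g, h⁻¹, h * g)` and
`(g, h, h⁻¹ * h⁻¹)`: the first two bound the smaller of `l (g * h)` and `l (h * g)`, the last two
transfer the bound to the other one. -/
theorem mul_le_max (h4 : FourPoint l η) (hzero : ∀ g, HasZeroTranslationLength l g) (g h : G) :
    l (g * h) ≤ max (l g) (l h) + 4 * η := by
  have hη := h4.nonneg
  have hsq (g : G) : l (g * g) ≤ l g + η := h4.sq_le (hzero g)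
  set m := max (l g) (l h)
  have hg : l g ≤ m := le_max_left _ _
  have hh : l h ≤ m := le_max_right _ _
  have h_conj : l (g * h * g) ≤ m + 2 * η := by
    have := h4 (g * h) g h
    rw [mul_assoc (g * h) g h] at this
    have : max (l (g * h) + l h) (l (g * h * (g * h)) + l g) ≤ l (g * h) + m + η :=
      max_le (by linarith) (by linarith [hsq (g * h)])
    linarith
  have h_sum : l (g * h) + l (h * g) ≤ 2 * m + 3 * η := by
    have := h4 g h g
    have : max (l g + l g) (l (g * h * g) + l h) ≤ 2 * m + 2 * η :=
      max_le (by linarith) (by linarith)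
    linarith
  by_contra! hlt
  have h_inv : l (g * h⁻¹) ≤ m + 2 * η := by
    have := h4 g h⁻¹ (h * g)
    rw [inv_mul_cancel_left, mul_assoc g, inv_mul_cancel_left, map_inv_eq_map] at this
    have : max (l g + l (h * g)) (l (g * g) + l h) ≤ l g + m + η :=
      max_le (by linarith) (by linarith [hsq g])
    linarith
  have := h4 g h (h⁻¹ * h⁻¹)
  rw [mul_inv_cancel_left, mul_assoc g, mul_inv_cancel_left, map_inv_eq_map, ← mul_inv_rev,
    map_inv_eq_map] at this
  have : max (l g + l (h * h)) (l (g * h⁻¹) + l h) ≤ l h + m + 2 * η :=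
    max_le (by linarith [hsq h]) (by linarith)
  linarith

end FourPoint

theorem exists_list_prod_of_closure_eq_top {s : ℝ} (hs : Subgroup.closure {g | l g ≤ s} = ⊤)
    (g : G) : ∃ L : List G, (∀ x ∈ L, l x ≤ s) ∧ L.prod = g := by
  have hg : g ∈ Submonoid.closure ({g | l g ≤ s} ∪ {g | l g ≤ s}⁻¹) := by
    rw [← Subgroup.closure_toSubmonoid, hs]
    exact Subgroup.mem_top g
  obtain ⟨L, hL, rfl⟩ := Submonoid.exists_list_of_mem_closure hg
  exact ⟨L, fun x hx => by simpa using hL x hx, rfl⟩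

theorem IsQuasiTreeSeminorm.bounded_of_closure_eq_top (hl : IsQuasiTreeSeminorm l)
    (hzero : ∀ g, HasZeroTranslationLength l g) {s : ℝ}
    (hs : Subgroup.closure {g | l g ≤ s} = ⊤) : ∃ C, ∀ g, l g ≤ C := by
  obtain ⟨η, hη⟩ := hl.fourPoint
  obtain ⟨B, hB⟩ := hl.exists_midpoint s
  refine ⟨2 * (B + 4 * η), fun g => ?_⟩
  obtain ⟨L, hL, rfl⟩ := exists_list_prod_of_closure_eq_top hs g
  obtain ⟨L₁, L₂, rfl, h₁, h₂⟩ := hB L hL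
  have := hη.mul_le_max hzero L₁.prod L₂.prod
  rw [← List.prod_append] at this
  linarith [max_le h₁ h₂]

theorem exists_closure_seminorm_le_eq_top [Group.FG G] (l : GroupSeminorm G) :
    ∃ s, Subgroup.closure {g | l g ≤ s} = ⊤ := by
  obtain ⟨S, hS, hfin⟩ := Group.fg_iff.1 ‹Group.FG G›
  obtain ⟨s, hs⟩ := (hfin.image l).bddAbove
  exact ⟨s, top_unique (hS ▸ Subgroup.closure_mono fun g hg => hs (Set.mem_image_of_mem l hg))⟩

theorem IsQuasiTreeSeminorm.bounded [Group.FG G] (hl : IsQuasiTreeSeminorm l)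
    (hzero : ∀ g, HasZeroTranslationLength l g) : ∃ C, ∀ g, l g ≤ C := by
  obtain ⟨s, hs⟩ := exists_closure_seminorm_le_eq_top l
  exact hl.bounded_of_closure_eq_top hzero hs

end ZeroTranslationLength

/-! ### Graphs with the bottleneck property -/

/-- Manning's bottleneck criterion, characterising graphs quasi-isometric to trees: every walk
between two points passes within distance `B` of every point metrically between them. -/
def HasBottleneck {V : Type*} (G : SimpleGraph V) (B : ℕ) : Prop :=
  ∀ (x y : V) (W : G.Walk x y) (m : V), G.dist x m + G.dist m y = G.dist x y →
    ∃ v ∈ W.support, G.dist v m ≤ B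

section Graph

open SimpleGraph

variable {V V' : Type*} {G : SimpleGraph V} {H : SimpleGraph V'} {T : SimpleGraph V'}

theorem edist_hom_apply_le (f : G →g H) (u v : V) : H.edist (f u) (f v) ≤ G.edist u v :=
  le_iInf fun w => (edist_le (w.map f)).trans_eq (by rw [Walk.length_map])

theorem dist_iso_apply (f : G ≃g H) (u v : V) : H.dist (f u) (f v) = G.dist u v := by
  have h : G.edist u v ≤ H.edist (f u) (f v) := by
    simpa using edist_hom_apply_le f.symm.toHom (f u) (f v)
  exact congrArg ENat.toNat ((edist_hom_apply_le f.toHom u v).antisymm h)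

theorem dist_add_dist_of_mem_support {x y t : V} {w : G.Walk x y}
    (hw : w.length = G.dist x y) (ht : t ∈ w.support) :
    G.dist x t + G.dist t y = G.dist x y := by
  classical
  rw [← length_eq_dist_of_subwalk hw (w.isSubwalk_takeUntil ht),
    ← length_eq_dist_of_subwalk hw (w.isSubwalk_dropUntil ht), ← Walk.length_append, w.take_spec,
    hw]

theorem dist_getVert_getVert {x y : V} {w : G.Walk x y} (hw : w.length = G.dist x y) {i j : ℕ}
    (hij : i ≤ j) (hj : j ≤ w.length) : G.dist (w.getVert i) (w.getVert j) = j - i := by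
  have h := length_eq_dist_of_subwalk hw
    (((w.take j).isSubwalk_drop i).trans (w.isSubwalk_take j))
  simpa [Walk.take_getVert, hij, hj] using h.symm

theorem exists_dist_eq_half (hG : G.Connected) (x y : V) :
    ∃ m, G.dist x m = G.dist x y / 2 ∧ G.dist m y = G.dist x y - G.dist x y / 2 := by
  obtain ⟨σ, hσ⟩ := hG.exists_walk_length_eq_dist x y
  have hle : G.dist x y / 2 ≤ σ.length := (Nat.div_le_self _ 2).trans_eq hσ.symm
  have hx := dist_getVert_getVert hσ (Nat.zero_le _) hle
  have hy := dist_getVert_getVert hσ hle le_rfl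
  rw [Walk.getVert_zero, Nat.sub_zero] at hx
  rw [Walk.getVert_length, hσ] at hy
  exact ⟨_, hx, hy⟩

theorem exists_walk_forall_dist_le (hG : G.Connected) (x y : V) :
    ∃ w : G.Walk x y, ∀ v ∈ w.support, G.dist v x ≤ G.dist x y := by
  obtain ⟨w, hw⟩ := hG.exists_walk_length_eq_dist x y
  refine ⟨w, fun v hv => ?_⟩
  have := dist_add_dist_of_mem_support hw hv
  rw [dist_comm]
  omega

theorem mem_support_of_isTree (hT : T.IsTree) {u v t : V'} (W : T.Walk u v)
    (ht : T.dist u t + T.dist t v = T.dist u v) : t ∈ W.support := by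
  classical
  obtain ⟨w₁, h₁⟩ := hT.connected.exists_walk_length_eq_dist u t
  obtain ⟨w₂, h₂⟩ := hT.connected.exists_walk_length_eq_dist t v
  have hpath : (w₁.append w₂).IsPath :=
    Walk.isPath_of_length_eq_dist _ (by rw [Walk.length_append, h₁, h₂, ht])
  have hunique : w₁.append w₂ = W.bypass :=
    (hT.existsUnique_path u v).unique hpath W.bypass_isPath
  apply W.support_bypass_subset_support
  rw [← hunique, Walk.mem_support_append_iff]
  exact .inl w₁.end_mem_support

theorem exists_walk_forall_near_image (hH : H.Connected) {q : V → V'} {A : ℕ}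
    (hq : ∀ a b, G.Adj a b → H.dist (q a) (q b) ≤ A) {x y : V} (W : G.Walk x y) :
    ∃ W' : H.Walk (q x) (q y), ∀ v ∈ W'.support, ∃ a ∈ W.support, H.dist v (q a) ≤ A := by
  induction W with
  | nil => exact ⟨Walk.nil, by simp⟩
  | @cons x z y hxz W ih =>
    obtain ⟨W', hW'⟩ := ih
    obtain ⟨w, hw⟩ := exists_walk_forall_dist_le hH (q x) (q z)
    refine ⟨w.append W', fun v hv => ?_⟩
    rcases Walk.mem_support_append_iff .. |>.1 hv with hv | hv
    · exact ⟨x, Walk.start_mem_support _, (hw v hv).trans (hq x z hxz)⟩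
    · obtain ⟨a, ha, hva⟩ := hW' v hv
      exact ⟨a, List.mem_cons_of_mem x ha, hva⟩

theorem exists_mem_support_dist_le_of_isTree (hT : T.IsTree) {q : V → V'} {A : ℕ}
    (hq : ∀ a b, G.Adj a b → T.dist (q a) (q b) ≤ A) {x y : V} (W : G.Walk x y) {t : V'}
    (ht : T.dist (q x) t + T.dist t (q y) = T.dist (q x) (q y)) :
    ∃ a ∈ W.support, T.dist t (q a) ≤ A := by
  obtain ⟨W', hW'⟩ := exists_walk_forall_near_image hT.connected hq W
  exact hW' t (mem_support_of_isTree hT W' ht)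

theorem exists_consecutive_of_forall_or {P Q : ℕ → Prop} {n : ℕ} (hP : P 0) (hQ : Q n)
    (h : ∀ i ≤ n, P i ∨ Q i) : ∃ i j, i ≤ j ∧ j ≤ i + 1 ∧ j ≤ n ∧ P i ∧ Q j := by
  classical
  have hex : ∃ j, Q j := ⟨n, hQ⟩
  have hle : Nat.find hex ≤ n := Nat.find_min' hex hQ
  rcases hfind : Nat.find hex with _ | i
  · exact ⟨0, 0, le_rfl, Nat.zero_le _, Nat.zero_le _, hP, hfind ▸ Nat.find_spec hex⟩
  · refine ⟨i, i + 1, i.le_succ, le_rfl, by omega, ?_, hfind ▸ Nat.find_spec hex⟩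
    exact (h i (by omega)).resolve_right (Nat.find_min hex (by omega))

theorem exists_near_both_sides_of_isTree (hT : T.IsTree) {q : V → V'} {A : ℕ}
    (hq : ∀ a b, G.Adj a b → T.dist (q a) (q b) ≤ A) {x m y : V} (w₁ : G.Walk x m)
    (w₂ : G.Walk m y) :
    ∃ a ∈ w₁.support, ∃ b ∈ w₂.support, T.dist (q a) (q b) ≤ 2 * A + 1 ∧
      ∃ t, T.dist (q x) t + T.dist t (q y) = T.dist (q x) (q y) ∧ T.dist t (q a) ≤ A := by
  have hTc := hT.connected
  obtain ⟨τ, hτ⟩ := hTc.exists_walk_length_eq_dist (q x) (q y)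
  have hbetween (j : ℕ) := dist_add_dist_of_mem_support hτ (τ.getVert_mem_support j)
  obtain ⟨i, j, hij, hji, hj, ⟨a, ha, hia⟩, ⟨b, hb, hjb⟩⟩ := exists_consecutive_of_forall_or
    (P := fun i => ∃ a ∈ w₁.support, T.dist (τ.getVert i) (q a) ≤ A)
    (Q := fun i => ∃ b ∈ w₂.support, T.dist (τ.getVert i) (q b) ≤ A) (n := τ.length)
    ⟨x, w₁.start_mem_support, by simp⟩ ⟨y, w₂.end_mem_support, by simp⟩ fun i _ => by
      obtain ⟨a, ha, hia⟩ :=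
        exists_mem_support_dist_le_of_isTree hT hq (w₁.append w₂) (hbetween i)
      exact (Walk.mem_support_append_iff .. |>.1 ha).imp (⟨a, ·, hia⟩) (⟨a, ·, hia⟩)
  refine ⟨a, ha, b, hb, ?_, _, hbetween i, hia⟩
  have h₁ := hTc.dist_triangle (u := q a) (v := τ.getVert i) (w := q b)
  have h₂ := hTc.dist_triangle (u := τ.getVert i) (v := τ.getVert j) (w := q b)
  have h₃ := dist_getVert_getVert hτ hij hj
  rw [dist_comm] at hia
  omega

theorem exists_hasBottleneck_of_isTree (hG : G.Connected) (hT : T.IsTree) {q : V → V'} {A A' : ℕ}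
    (hq : ∀ a b, G.Adj a b → T.dist (q a) (q b) ≤ A)
    (hq' : ∀ a b, G.dist a b ≤ A' * T.dist (q a) (q b) + A') : ∃ B, HasBottleneck G B := by
  refine ⟨2 * (A' * (2 * A + 1) + A'), fun x y W m hm => ?_⟩
  obtain ⟨w₁, hw₁⟩ := hG.exists_walk_length_eq_dist x m
  obtain ⟨w₂, hw₂⟩ := hG.exists_walk_length_eq_dist m y
  obtain ⟨a, ha, b, hb, hab, t, ht, hta⟩ := exists_near_both_sides_of_isTree hT hq w₁ w₂
  obtain ⟨v, hv, htv⟩ := exists_mem_support_dist_le_of_isTree hT hq W ht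
  have hclose {c d : V} (h : T.dist (q c) (q d) ≤ 2 * A + 1) :
      G.dist c d ≤ A' * (2 * A + 1) + A' :=
    (hq' c d).trans (by gcongr)
  have ham : G.dist a m ≤ G.dist a b := by
    have := dist_add_dist_of_mem_support hw₁ ha
    have := dist_add_dist_of_mem_support hw₂ hb
    have := hG.dist_triangle (u := x) (v := a) (w := y)
    have := hG.dist_triangle (u := a) (v := b) (w := y)
    omega
  have hva : T.dist (q v) (q a) ≤ 2 * A + 1 := by
    have := hT.connected.dist_triangle (u := q v) (v := t) (w := q a)
    rw [dist_comm] at htv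
    omega
  refine ⟨v, hv, (hG.dist_triangle (v := a)).trans ?_⟩
  linarith [hclose hva, hclose hab]

namespace HasBottleneck

variable {B : ℕ}

theorem exists_getVert_center (hG : G.Connected) (hB : HasBottleneck G B) {x z : V}
    {σ : G.Walk x z} (hσ : σ.length = G.dist x z) (y : V) :
    ∃ i ≤ σ.length, G.dist y (σ.getVert i) + i ≤ G.dist x y + 2 * (B + 1) ∧
      G.dist y (σ.getVert i) + (σ.length - i) ≤ G.dist y z + 2 * (B + 1) := by
  obtain ⟨w₁, hw₁⟩ := hG.exists_walk_length_eq_dist x y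
  obtain ⟨w₂, hw₂⟩ := hG.exists_walk_length_eq_dist y z
  obtain ⟨i, j, hij, hji, hj, hPi, hQj⟩ := exists_consecutive_of_forall_or
    (P := fun i => G.dist y (σ.getVert i) + i ≤ G.dist x y + 2 * B)
    (Q := fun i => G.dist y (σ.getVert i) + (σ.length - i) ≤ G.dist y z + 2 * B)
    (n := σ.length) (by simp [G.dist_comm (u := y)]) (by simp) fun i hi => by
      obtain ⟨v, hv, hd⟩ := hB x z (w₁.append w₂) (σ.getVert i)
        (dist_add_dist_of_mem_support hσ (σ.getVert_mem_support i))
      have hxi := dist_getVert_getVert hσ (Nat.zero_le i) hi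
      have hiz := dist_getVert_getVert hσ hi le_rfl
      simp only [Walk.getVert_zero, Walk.getVert_length, G.dist_comm (v := z)] at hxi hiz
      have hyi := hG.dist_triangle (u := y) (v := v) (w := σ.getVert i)
      rcases Walk.mem_support_append_iff .. |>.1 hv with hv | hv
      · have := dist_add_dist_of_mem_support hw₁ hv
        have := hG.dist_triangle (u := x) (v := v) (w := σ.getVert i)
        rw [G.dist_comm (u := y) (v := v)] at hyi
        omega
      · have := dist_add_dist_of_mem_support hw₂ hv
        have := hG.dist_triangle (u := z) (v := v) (w := σ.getVert i)
        rw [G.dist_comm (u := z) (v := v)] at this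
        omega
  have hstep := dist_getVert_getVert hσ hij hj
  have := hG.dist_triangle (u := y) (v := σ.getVert i) (w := σ.getVert j)
  exact ⟨j, hj, by omega, by omega⟩

theorem dist_add_dist_le (hG : G.Connected) (hB : HasBottleneck G B) (x y z w : V) :
    G.dist x z + G.dist y w ≤
      max (G.dist x y + G.dist z w) (G.dist x w + G.dist y z) + 4 * (B + 1) := by
  obtain ⟨σ, hσ⟩ := hG.exists_walk_length_eq_dist x z
  obtain ⟨i, hi, hxy, hyz⟩ := hB.exists_getVert_center hG hσ y
  obtain ⟨j, hj, hxw, hwz⟩ := hB.exists_getVert_center hG hσ w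
  have h₁ := hG.dist_triangle (u := y) (v := σ.getVert i) (w := w)
  have h₂ := hG.dist_triangle (u := σ.getVert i) (v := σ.getVert j) (w := w)
  rw [G.dist_comm (u := σ.getVert j) (v := w)] at h₂
  rw [G.dist_comm (u := w) (v := z)] at hwz
  rcases le_total i j with hij | hji
  · have := dist_getVert_getVert hσ hij hj
    omega
  · have := dist_getVert_getVert hσ hji hi
    rw [G.dist_comm] at this
    omega

end HasBottleneck

/-- The displacement `g ↦ d(x, g x)` of a base point under an action by graph automorphisms. -/
noncomputable def displacement {Γ : Type*} [Group Γ] (hG : G.Connected) (ρ : Γ →* (G ≃g G))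
    (x : V) : GroupSeminorm Γ where
  toFun g := G.dist x (ρ g x)
  map_one' := by simp
  mul_le' g h := by
    have := hG.dist_triangle (u := x) (v := ρ g x) (w := ρ g (ρ h x))
    rw [dist_iso_apply] at this
    rw [map_mul, RelIso.mul_apply]
    exact_mod_cast this
  inv' g := by
    rw [← dist_iso_apply (ρ g), ← RelIso.mul_apply, ← map_mul, mul_inv_cancel, map_one,
      RelIso.one_apply, dist_comm]

section Displacement

variable {Γ : Type*} [Group Γ]

theorem displacement_apply (hG : G.Connected) (ρ : Γ →* (G ≃g G)) (x : V) (g : Γ) :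
    displacement hG ρ x g = G.dist x (ρ g x) := rfl

theorem dist_apply_mul (ρ : Γ →* (G ≃g G)) (x : V) (g h : Γ) :
    G.dist (ρ g x) (ρ (g * h) x) = G.dist x (ρ h x) := by
  rw [map_mul, RelIso.mul_apply, dist_iso_apply]

theorem exists_walk_forall_near_orbit (hG : G.Connected) (ρ : Γ →* (G ≃g G)) (x : V) {s : ℕ}
    (L : List Γ) (hL : ∀ g ∈ L, G.dist x (ρ g x) ≤ s) :
    ∃ W : G.Walk x (ρ L.prod x), ∀ v ∈ W.support,
      ∃ L₁ L₂, L = L₁ ++ L₂ ∧ G.dist v (ρ L₁.prod x) ≤ s := by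
  induction L with
  | nil =>
    refine ⟨Walk.nil.copy rfl (by simp), fun v hv => ⟨[], [], rfl, ?_⟩⟩
    rw [Walk.support_copy, Walk.support_nil, List.mem_singleton] at hv
    simp [hv]
  | cons g L ih =>
    obtain ⟨W, hW⟩ := ih fun h hh => hL h (List.mem_cons_of_mem g hh)
    obtain ⟨w, hw⟩ := exists_walk_forall_dist_le hG x (ρ g x)
    refine ⟨(w.append (W.map (ρ g).toHom)).copy rfl (by simp), fun v hv => ?_⟩
    rw [Walk.support_copy, Walk.mem_support_append_iff, Walk.support_map, List.mem_map] at hv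
    rcases hv with hv | ⟨v, hv, rfl⟩
    · exact ⟨[], g :: L, rfl, by simpa using (hw v hv).trans (hL g List.mem_cons_self)⟩
    · obtain ⟨L₁, L₂, rfl, hd⟩ := hW v hv
      refine ⟨g :: L₁, L₂, rfl, ?_⟩
      rw [List.prod_cons, map_mul, RelIso.mul_apply]
      exact (dist_iso_apply (ρ g) _ _).trans_le hd

theorem displacement_fourPoint (hG : G.Connected) {B : ℕ} (hB : HasBottleneck G B)
    (ρ : Γ →* (G ≃g G)) (x : V) : FourPoint (displacement hG ρ x) (4 * (B + 1)) := by
  intro a b c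
  have h := hB.dist_add_dist_le hG x (ρ a x) (ρ (a * b) x) (ρ (a * b * c) x)
  rw [dist_apply_mul, dist_apply_mul, mul_assoc a b c, dist_apply_mul, ← mul_assoc] at h
  simp only [displacement_apply]
  exact_mod_cast h

theorem isQuasiTreeSeminorm_displacement (hG : G.Connected) {B : ℕ} (hB : HasBottleneck G B)
    (ρ : Γ →* (G ≃g G)) (x : V) : IsQuasiTreeSeminorm (displacement hG ρ x) where
  fourPoint := ⟨_, displacement_fourPoint hG hB ρ x⟩
  exists_midpoint s := by
    refine ⟨B + ⌈s⌉₊ + 1, fun L hL => ?_⟩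
    simp only [displacement_apply] at hL ⊢
    obtain ⟨W, hW⟩ := exists_walk_forall_near_orbit hG ρ x L
      fun g hg => by exact_mod_cast (hL g hg).trans (Nat.le_ceil s)
    obtain ⟨m, hxm, hmy⟩ := exists_dist_eq_half hG x (ρ L.prod x)
    obtain ⟨v, hv, hvm⟩ := hB x _ W m (by omega)
    obtain ⟨L₁, L₂, rfl, hd⟩ := hW v hv
    rw [List.prod_append] at hxm hmy ⊢
    have h₁ := hG.dist_triangle (u := x) (v := m) (w := ρ L₁.prod x)
    have h₂ := hG.dist_triangle (u := ρ L₁.prod x) (v := m) (w := ρ (L₁.prod * L₂.prod) x)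
    have h₃ := hG.dist_triangle (u := m) (v := v) (w := ρ L₁.prod x)
    rw [dist_apply_mul, G.dist_comm (u := ρ L₁.prod x) (v := m)] at h₂
    rw [G.dist_comm (u := m) (v := v)] at h₃
    have half {d D : ℕ} (h : 2 * d ≤ D + 2 * (B + ⌈s⌉₊ + 1)) :
        (d : ℝ) ≤ D / 2 + (B + ⌈s⌉₊ + 1) := by
      have : (2 * d : ℝ) ≤ D + 2 * (B + ⌈s⌉₊ + 1) := by exact_mod_cast h
      linarith
    exact ⟨L₁, L₂, rfl, half (by omega), half (by omega)⟩

end Displacement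

end Graph

/-! ### Spaces quasi-isometric to trees -/

/-- `q` is a quasi-isometry, with constants `K` and `C`, from `X` to the vertex set of the graph
`T` with its path metric. -/
structure IsQuasiIsometry {X V : Type*} [PseudoMetricSpace X] (q : X → V) (T : SimpleGraph V)
    (K C : ℝ) : Prop where
  one_le : 1 ≤ K
  nonneg : 0 ≤ C
  lower : ∀ x₁ x₂, dist x₁ x₂ / K - C ≤ T.dist (q x₁) (q x₂)
  upper : ∀ x₁ x₂, (T.dist (q x₁) (q x₂) : ℝ) ≤ K * dist x₁ x₂ + C
  dense : ∀ v, ∃ x, (T.dist v (q x) : ℝ) ≤ C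

/-- The Rips graph of `X` at scale `R`: distinct points are adjacent when they are at distance at
most `R`. -/
def ripsGraph (X : Type*) [PseudoMetricSpace X] (R : ℝ) : SimpleGraph X :=
  SimpleGraph.fromRel fun x y => dist x y ≤ R

section Rips

open SimpleGraph

variable {X V : Type*} [PseudoMetricSpace X] {T : SimpleGraph V} {q : X → V} {K C R : ℝ}

theorem ripsGraph_adj {x y : X} : (ripsGraph X R).Adj x y ↔ x ≠ y ∧ dist x y ≤ R := by
  simp [ripsGraph, _root_.dist_comm y x]

theorem dist_le_mul_length {x y : X} (w : (ripsGraph X R).Walk x y) :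
    dist x y ≤ R * w.length := by
  induction w with
  | nil => simp
  | @cons x z y hxz w ih =>
    have := dist_triangle x z y
    have := (ripsGraph_adj.1 hxz).2
    rw [Walk.length_cons]
    push_cast
    linarith

theorem exists_walk_length_le_one {x y : X} (h : dist x y ≤ R) :
    ∃ w : (ripsGraph X R).Walk x y, w.length ≤ 1 := by
  by_cases hxy : x = y
  · subst hxy
    exact ⟨Walk.nil, by simp⟩
  · exact ⟨(ripsGraph_adj.2 ⟨hxy, h⟩).toWalk, le_rfl⟩

/-- The action of the isometries of `X` on its Rips graph. -/
def ripsGraphAction (X : Type*) [PseudoMetricSpace X] (R : ℝ) :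
    (X ≃ᵢ X) →* (ripsGraph X R ≃g ripsGraph X R) where
  toFun e := ⟨e.toEquiv, by simp [ripsGraph_adj, e.dist_eq]⟩
  map_one' := rfl
  map_mul' _ _ := rfl

namespace IsQuasiIsometry

theorem dist_le (hq : IsQuasiIsometry q T K C) (x y : X) :
    dist x y ≤ K * (T.dist (q x) (q y) + C) := by
  have h := hq.lower x y
  rwa [sub_le_iff_le_add, div_le_iff₀' (zero_lt_one.trans_le hq.one_le)] at h

theorem exists_walk_length_le (hq : IsQuasiIsometry q T K C) (hT : T.Connected) {u v : V}
    (τ : T.Walk u v) {x y : X} (hx : T.dist u (q x) ≤ C) (hy : T.dist v (q y) ≤ C) :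
    ∃ w : (ripsGraph X (K * (3 * C + 1))).Walk x y, w.length ≤ τ.length + 1 := by
  have hK := zero_le_one.trans hq.one_le
  have close {u v : V} {x y : X} (huv : T.dist u v ≤ 1) (hx : T.dist u (q x) ≤ C)
      (hy : T.dist v (q y) ≤ C) : dist x y ≤ K * (3 * C + 1) := by
    have h₁ := hT.dist_triangle (u := q x) (v := u) (w := q y)
    have h₂ := hT.dist_triangle (u := u) (v := v) (w := q y)
    rw [T.dist_comm (v := u)] at h₁
    have h : (T.dist (q x) (q y) : ℝ) ≤ T.dist u (q x) + 1 + T.dist v (q y) := by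
      exact_mod_cast (by omega : T.dist (q x) (q y) ≤ T.dist u (q x) + 1 + T.dist v (q y))
    exact (hq.dist_le x y).trans (mul_le_mul_of_nonneg_left (by linarith) hK)
  induction τ generalizing x with
  | nil => exact exists_walk_length_le_one (close (by simp) hx hy)
  | @cons u u' v huu' τ ih =>
    obtain ⟨x', hx'⟩ := hq.dense u'
    obtain ⟨w', hw'⟩ := exists_walk_length_le_one (close (dist_eq_one_iff_adj.2 huu').le hx hx')
    obtain ⟨w, hw⟩ := ih hx' hy
    exact ⟨w'.append w, by rw [Walk.length_append, Walk.length_cons]; omega⟩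

theorem exists_walk_length_le_dist (hq : IsQuasiIsometry q T K C) (hT : T.Connected) (x y : X) :
    ∃ w : (ripsGraph X (K * (3 * C + 1))).Walk x y, w.length ≤ T.dist (q x) (q y) + 1 := by
  obtain ⟨τ, hτ⟩ := hT.exists_walk_length_eq_dist (q x) (q y)
  rw [← hτ]
  exact hq.exists_walk_length_le hT τ (by simpa using hq.nonneg) (by simpa using hq.nonneg)

theorem ripsGraph_connected [Nonempty X] (hq : IsQuasiIsometry q T K C) (hT : T.Connected) :
    (ripsGraph X (K * (3 * C + 1))).Connected :=
  ⟨fun x y => ⟨(hq.exists_walk_length_le_dist hT x y).choose⟩⟩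

theorem exists_hasBottleneck [Nonempty X] (hq : IsQuasiIsometry q T K C) (hT : T.IsTree) :
    ∃ B, HasBottleneck (ripsGraph X (K * (3 * C + 1))) B := by
  have hK := zero_le_one.trans hq.one_le
  refine exists_hasBottleneck_of_isTree (hq.ripsGraph_connected hT.connected) hT (q := q)
    (A := ⌈K * (K * (3 * C + 1)) + C⌉₊) (A' := 1) (fun x y hxy => ?_) fun x y => ?_
  · have h : (T.dist (q x) (q y) : ℝ) ≤ K * (K * (3 * C + 1)) + C :=
      (hq.upper x y).trans (by gcongr; exact (ripsGraph_adj.1 hxy).2)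
    exact_mod_cast h.trans (Nat.le_ceil _)
  · obtain ⟨w, hw⟩ := hq.exists_walk_length_le_dist hT.connected x y
    rw [one_mul]
    exact (SimpleGraph.dist_le w).trans hw

theorem exists_isQuasiTreeSeminorm (hq : IsQuasiIsometry q T K C) (hT : T.IsTree) {Γ : Type*}
    [Group Γ] (ρ : Γ →* (X ≃ᵢ X)) (x : X) :
    ∃ l : GroupSeminorm Γ, IsQuasiTreeSeminorm l ∧ ∃ R ≥ 0, ∀ g, dist x (ρ g x) ≤ R * l g := by
  have : Nonempty X := ⟨x⟩
  have hG := hq.ripsGraph_connected hT.connected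
  obtain ⟨B, hB⟩ := hq.exists_hasBottleneck hT
  have hR : 0 ≤ K * (3 * C + 1) :=
    mul_nonneg (zero_le_one.trans hq.one_le) (by linarith [hq.nonneg])
  refine ⟨displacement hG ((ripsGraphAction X _).comp ρ) x,
    isQuasiTreeSeminorm_displacement hG hB _ x, _, hR, fun g => ?_⟩
  obtain ⟨w, hw⟩ := hG.exists_walk_length_eq_dist x (ρ g x)
  calc dist x (ρ g x) ≤ K * (3 * C + 1) * w.length := dist_le_mul_length w
    _ = _ := by rw [hw]; rfl

end IsQuasiIsometry

end Rips

/-! ### Transvections -/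

section Transvection

open Matrix Matrix.SpecialLinearGroup
open scoped commutatorElement

variable {R ι : Type*} [CommRing R] [Fintype ι] [DecidableEq ι] {i j k : ι}

/-- The root subgroup `b ↦ 1 + b E_ij` of `SL(ι, R)`. -/
def transvectionHom (hij : i ≠ j) : Multiplicative R →* SpecialLinearGroup ι R where
  toFun b := transvection hij b.toAdd
  map_one' := transvection_coeff_zero hij
  map_mul' _ _ := transvection_add hij _ _

/-- The length `l` is at most `C` on every transvection. -/
def IsTransvectionBound (l : GroupSeminorm (SpecialLinearGroup ι R)) (C : ℝ) : Prop :=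
  ∀ (i j : ι) (hij : i ≠ j) (b : R), l (transvection hij b) ≤ C

theorem transvection_pow (hij : i ≠ j) (b : R) (m : ℕ) :
    transvection hij b ^ m = transvection hij (m * b) := by
  have := map_pow (transvectionHom hij) (Multiplicative.ofAdd b) m
  rw [← nsmul_eq_mul]
  exact this.symm

theorem commutatorElement_transvection (hij : i ≠ j) (hik : i ≠ k) (hkj : k ≠ j) (a b : R) :
    ⁅transvection hik a, transvection hkj b⁆ = transvection hij (a * b) := by
  rw [commutatorElement_def, mul_inv_eq_iff_eq_mul, mul_inv_eq_iff_eq_mul]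
  apply Subtype.ext
  simp only [coe_mul, transvection_coe, mul_add, add_mul, one_mul, mul_one,
    single_mul_single_same, single_mul_single_of_ne _ _ _ _ hij.symm,
    single_mul_single_of_ne _ _ _ _ hkj.symm, zero_mul]
  abel

theorem hasZeroTranslationLength_transvection (l : GroupSeminorm (SpecialLinearGroup ι R))
    (hij : i ≠ j) (hik : i ≠ k) (hkj : k ≠ j) (b : R) :
    HasZeroTranslationLength l (transvection hij b) := by
  refine hasZeroTranslationLength_of_pow_eq_commutatorElement
    (x := transvection hik 1) (y := transvection hkj b) fun m => ?_
  simp only [transvection_pow, commutatorElement_transvection hij hik hkj]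
  push_cast
  ring_nf

namespace IsQuasiTreeSeminorm

variable [Module.Finite ℤ R] {l : GroupSeminorm (SpecialLinearGroup ι R)}

theorem exists_transvection_le (hl : IsQuasiTreeSeminorm l) (hij : i ≠ j) (hik : i ≠ k)
    (hkj : k ≠ j) : ∃ C, ∀ b : R, l (transvection hij b) ≤ C := by
  have : AddGroup.FG R := Module.Finite.iff_addGroup_fg.1 inferInstance
  obtain ⟨C, hC⟩ := (hl.comp (transvectionHom (R := R) hij)).bounded fun b =>
    hasZeroTranslationLength_comp_iff.2
      (hasZeroTranslationLength_transvection l hij hik hkj b.toAdd)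
  exact ⟨C, fun b => hC (.ofAdd b)⟩

theorem exists_isTransvectionBound (hl : IsQuasiTreeSeminorm l) (hι : 3 ≤ Fintype.card ι) :
    ∃ C, IsTransvectionBound l C := by
  have hpair (p : ι × ι) : ∃ C, ∀ (hp : p.1 ≠ p.2) (b : R), l (transvection hp b) ≤ C := by
    by_cases hp : p.1 = p.2
    · exact ⟨0, fun h => absurd hp h⟩
    obtain ⟨k, hk⟩ := Finset.exists_mem_notMem_of_card_lt_card (s := {p.1, p.2})
      (t := Finset.univ) (Finset.card_le_two.trans_lt (by rwa [Finset.card_univ]))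
    simp only [Finset.mem_insert, Finset.mem_singleton, not_or] at hk
    obtain ⟨C, hC⟩ := hl.exists_transvection_le hp (Ne.symm hk.2.1) hk.2.2
    exact ⟨C, fun _ => hC⟩
  choose f hf using hpair
  obtain ⟨C, hC⟩ := Finite.exists_le f
  exact ⟨C, fun i j hij b => (hf (i, j) hij b).trans (hC (i, j))⟩

end IsQuasiTreeSeminorm

end Transvection

/-! ### Stabilization -/

section Stabilization

open Matrix Matrix.SpecialLinearGroup

variable {R : Type*} {k : ℕ}

/-- The block matrix `[a, w; v, h]` with scalar upper left corner `a`. -/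
def borderedMatrix (a : R) (w v : Fin k → R) (h : Matrix (Fin k) (Fin k) R) :
    Matrix (Fin (k + 1)) (Fin (k + 1)) R :=
  of (Fin.cons (Fin.cons a w) fun i => Fin.cons (v i) (h i))

section Entries

variable (a : R) (w v : Fin k → R) (h : Matrix (Fin k) (Fin k) R) (i j : Fin k)

@[simp]
theorem borderedMatrix_zero_zero : borderedMatrix a w v h 0 0 = a := rfl

@[simp]
theorem borderedMatrix_zero_succ : borderedMatrix a w v h 0 j.succ = w j := rfl

@[simp]
theorem borderedMatrix_succ_zero : borderedMatrix a w v h i.succ 0 = v i := rfl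

@[simp]
theorem borderedMatrix_succ_succ : borderedMatrix a w v h i.succ j.succ = h i j := rfl

end Entries

theorem eq_borderedMatrix (A : Matrix (Fin (k + 1)) (Fin (k + 1)) R) :
    A = borderedMatrix (A 0 0) (fun j => A 0 j.succ) (fun i => A i.succ 0)
      (A.submatrix Fin.succ Fin.succ) := by
  ext i j
  cases i using Fin.cases <;> cases j using Fin.cases <;> rfl

variable [CommRing R]

theorem one_eq_borderedMatrix :
    (1 : Matrix (Fin (k + 1)) (Fin (k + 1)) R) = borderedMatrix 1 0 0 1 := by
  ext i j
  cases i using Fin.cases <;> cases j using Fin.cases <;> simp [Matrix.one_apply, eq_comm]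

theorem borderedMatrix_mul (a a' : R) (w w' v v' : Fin k → R)
    (h h' : Matrix (Fin k) (Fin k) R) :
    borderedMatrix a w v h * borderedMatrix a' w' v' h' =
      borderedMatrix (a * a' + w ⬝ᵥ v') (a • w' + w ᵥ* h') (a' • v + h *ᵥ v')
        (vecMulVec v w' + h * h') := by
  ext i j
  cases i using Fin.cases <;> cases j using Fin.cases <;>
    simp [Matrix.mul_apply, Fin.sum_univ_succ, dotProduct, vecMul, mulVec, vecMulVec, mul_comm]

theorem det_borderedMatrix_zero_column (a : R) (w : Fin k → R) (h : Matrix (Fin k) (Fin k) R) :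
    (borderedMatrix a w 0 h).det = a * h.det := by
  rw [det_succ_column_zero, Fin.sum_univ_succ]
  simp
  rfl

theorem det_borderedMatrix_zero_row (a : R) (v : Fin k → R) (h : Matrix (Fin k) (Fin k) R) :
    (borderedMatrix a 0 v h).det = a * h.det := by
  rw [det_succ_row_zero, Fin.sum_univ_succ]
  simp
  rfl

/-- The embedding `h ↦ [1, 0; 0, h]` of `SL(k, R)` into `SL(k + 1, R)`. -/
def stabilization : SpecialLinearGroup (Fin k) R →* SpecialLinearGroup (Fin (k + 1)) R where
  toFun h := ⟨borderedMatrix 1 0 0 h, by rw [det_borderedMatrix_zero_row, det_coe, one_mul]⟩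
  map_one' := Subtype.ext one_eq_borderedMatrix.symm
  map_mul' g h := Subtype.ext <| .trans (by simp) (borderedMatrix_mul ..).symm

/-- The unipotent group of matrices `[1, 0; v, 1]`. -/
def columnUnipotent : Multiplicative (Fin k → R) →* SpecialLinearGroup (Fin (k + 1)) R where
  toFun v := ⟨borderedMatrix 1 0 v.toAdd 1, by simp [det_borderedMatrix_zero_row]⟩
  map_one' := Subtype.ext one_eq_borderedMatrix.symm
  map_mul' v v' := Subtype.ext <| .trans (by simp) (borderedMatrix_mul ..).symm

/-- The unipotent group of matrices `[1, w; 0, 1]`. -/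
def rowUnipotent : Multiplicative (Fin k → R) →* SpecialLinearGroup (Fin (k + 1)) R where
  toFun w := ⟨borderedMatrix 1 w.toAdd 0 1, by simp [det_borderedMatrix_zero_column]⟩
  map_one' := Subtype.ext one_eq_borderedMatrix.symm
  map_mul' w w' := Subtype.ext <| .trans (by simp [add_comm]) (borderedMatrix_mul ..).symm

@[simp]
theorem coe_stabilization (h : SpecialLinearGroup (Fin k) R) :
    (stabilization h : Matrix _ _ R) = borderedMatrix 1 0 0 h.1 := rfl

@[simp]
theorem coe_columnUnipotent (v : Multiplicative (Fin k → R)) :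
    (columnUnipotent v : Matrix _ _ R) = borderedMatrix 1 0 v.toAdd 1 := rfl

@[simp]
theorem coe_rowUnipotent (w : Multiplicative (Fin k → R)) :
    (rowUnipotent w : Matrix _ _ R) = borderedMatrix 1 w.toAdd 0 1 := rfl

theorem stabilization_transvection {i j : Fin k} (hij : i ≠ j) (b : R) :
    stabilization (transvection hij b) =
      transvection ((Fin.succ_injective k).ne hij) b := by
  apply Subtype.ext
  simp only [coe_stabilization, transvection_coe]
  rw [one_eq_borderedMatrix]
  ext i' j'
  cases i' using Fin.cases <;> cases j' using Fin.cases <;>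
    simp [Matrix.single_apply]

theorem columnUnipotent_single (j : Fin k) (b : R) :
    columnUnipotent (.ofAdd (Pi.single j b)) = transvection (Fin.succ_ne_zero j) b := by
  apply Subtype.ext
  simp only [coe_columnUnipotent, transvection_coe]
  rw [one_eq_borderedMatrix]
  ext i' j'
  cases i' using Fin.cases <;> cases j' using Fin.cases <;>
    simp [Matrix.single_apply, Pi.single_apply, Fin.succ_ne_zero, (Fin.succ_ne_zero _).symm,
      eq_comm]

theorem rowUnipotent_single (j : Fin k) (b : R) :
    rowUnipotent (.ofAdd (Pi.single j b)) = transvection (Fin.succ_ne_zero j).symm b := by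
  apply Subtype.ext
  simp only [coe_rowUnipotent, transvection_coe]
  rw [one_eq_borderedMatrix]
  ext i' j'
  cases i' using Fin.cases <;> cases j' using Fin.cases <;>
    simp [Matrix.single_apply, Pi.single_apply, Fin.succ_ne_zero, (Fin.succ_ne_zero _).symm,
      eq_comm]

theorem exists_eq_columnUnipotent_mul_stabilization_mul_rowUnipotent
    {g : SpecialLinearGroup (Fin (k + 1)) R} (hg : g 0 0 = 1) :
    ∃ v h w, g = columnUnipotent v * stabilization h * rowUnipotent w := by
  set v : Fin k → R := fun i => g i.succ 0
  set w : Fin k → R := fun j => g 0 j.succ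
  set h := g.1.submatrix Fin.succ Fin.succ - vecMulVec v w
  have hmul : g.1 = borderedMatrix 1 0 v 1 * borderedMatrix 1 0 0 h * borderedMatrix 1 w 0 1 := by
    rw [eq_borderedMatrix g.1, hg]
    simp [borderedMatrix_mul, h, v, w]
  have hdet : h.det = 1 := by
    simpa [det_borderedMatrix_zero_row, det_borderedMatrix_zero_column] using
      (congrArg det hmul).symm.trans g.det_coe
  exact ⟨.ofAdd v, ⟨h, hdet⟩, .ofAdd w, Subtype.ext hmul⟩

end Stabilization

/-! ### Bounds for `SL₂` inside `SL₃` -/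

section SL2

open Matrix Matrix.SpecialLinearGroup

variable {R : Type*} [CommRing R]

/-- The signed permutation matrix representing the transposition of `i` and `j`, written as a
product of transvections. -/
def weylElement {ι : Type*} [Fintype ι] [DecidableEq ι] {i j : ι} (hij : i ≠ j) (R : Type*)
    [CommRing R] : SpecialLinearGroup ι R :=
  transvection hij 1 * transvection hij.symm (-1) * transvection hij 1

theorem coe_transvection_fin_three {i j : Fin 3} (hij : i ≠ j) (b : R) :
    (transvection hij b).1 =
      !![1, if i = 0 ∧ j = 1 then b else 0, if i = 0 ∧ j = 2 then b else 0;
        if i = 1 ∧ j = 0 then b else 0, 1, if i = 1 ∧ j = 2 then b else 0;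
        if i = 2 ∧ j = 0 then b else 0, if i = 2 ∧ j = 1 then b else 0, 1] := by
  rw [transvection_coe]
  ext a c
  fin_cases a <;> fin_cases c <;> simp [Matrix.single_apply] <;> grind

theorem coe_weylElement_zero_one :
    (weylElement (zero_ne_one (α := Fin 3)) R).1 = !![0, 1, 0; -1, 0, 0; 0, 0, 1] := by
  simp [weylElement, coe_transvection_fin_three]

theorem coe_weylElement_zero_two :
    (weylElement (show (0 : Fin 3) ≠ 2 by decide) R).1 = !![0, 0, 1; 0, 1, 0; -1, 0, 0] := by
  simp [weylElement, coe_transvection_fin_three]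

theorem coe_stabilization_fin_two (M : SpecialLinearGroup (Fin 2) R) :
    (stabilization M).1 = !![1, 0, 0; 0, M 0 0, M 0 1; 0, M 1 0, M 1 1] := by
  ext i j
  fin_cases i <;> fin_cases j <;> rfl

theorem coe_weylElement_zero_one_conj_stabilization (M : SpecialLinearGroup (Fin 2) R) :
    (weylElement (zero_ne_one (α := Fin 3)) R * stabilization M *
      (weylElement (zero_ne_one (α := Fin 3)) R)⁻¹).1 =
      !![M 0 0, 0, M 0 1; 0, 1, 0; M 1 0, 0, M 1 1] := by
  rw [coe_mul, coe_mul, coe_inv, coe_weylElement_zero_one, coe_stabilization_fin_two]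
  simp [adjugate_fin_three_of]

theorem coe_weylElement_zero_two_conj_stabilization (M : SpecialLinearGroup (Fin 2) R) :
    (weylElement (show (0 : Fin 3) ≠ 2 by decide) R * stabilization M *
      (weylElement (show (0 : Fin 3) ≠ 2 by decide) R)⁻¹).1 =
      !![M 1 1, M 1 0, 0; M 0 1, M 0 0, 0; 0, 0, 1] := by
  rw [coe_mul, coe_mul, coe_inv, coe_weylElement_zero_two, coe_stabilization_fin_two]
  simp [adjugate_fin_three_of]

/-- Multiplicativity of Mennicke symbols, realized by an explicit factorization. -/
theorem stabilization_eq_of_top_row_mul {M N₁ N₂ : SpecialLinearGroup (Fin 2) R} {p q₁ q₂ r s : R}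
    (hM : M.1 = !![p, q₁ * q₂; r, s]) (hN₁ : N₁.1 = !![p, q₁; q₂ * r, s])
    (hN₂ : N₂.1 = !![p, -q₂; -(q₁ * r), s]) :
    stabilization M =
      weylElement (zero_ne_one (α := Fin 3)) R * stabilization N₂ *
        (weylElement (zero_ne_one (α := Fin 3)) R)⁻¹ *
      transvection (show (2 : Fin 3) ≠ 1 by decide) r *
      (weylElement (show (0 : Fin 3) ≠ 2 by decide) R * stabilization N₁ *
        (weylElement (show (0 : Fin 3) ≠ 2 by decide) R)⁻¹) *
      transvection (show (0 : Fin 3) ≠ 2 by decide) q₂ *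
      transvection (show (2 : Fin 3) ≠ 0 by decide) (q₁ * r) *
      transvection (show (1 : Fin 3) ≠ 0 by decide) (-(q₁ * s)) := by
  have hdet : p * s - q₁ * q₂ * r = 1 := by
    simpa [hM, det_fin_two] using M.det_coe
  apply Subtype.ext
  rw [coe_mul, coe_mul, coe_mul, coe_mul, coe_mul, coe_weylElement_zero_one_conj_stabilization,
    coe_weylElement_zero_two_conj_stabilization, coe_stabilization_fin_two, hM, hN₁, hN₂]
  simp only [coe_transvection_fin_three, Fin.reduceEq, and_true, and_false, if_true,
    if_false]
  ext i j
  fin_cases i <;> fin_cases j <;> simp [Matrix.mul_apply, Fin.sum_univ_three] <;> grind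

/-- The elements of `SL₂ ⊆ SL₃` with top row `(p, q)` have length at most `K`. Such elements are
determined by their top row up to elementary matrices, so this plays the role of a bound on the
Mennicke symbol of `(p, q)`. -/
def TopRowBound (l : GroupSeminorm (SpecialLinearGroup (Fin 3) R)) (p q : R) (K : ℝ) : Prop :=
  ∀ M : SpecialLinearGroup (Fin 2) R, M 0 0 = p → M 0 1 = q → l (stabilization M) ≤ K

variable {l : GroupSeminorm (SpecialLinearGroup (Fin 3) R)} {C K K₁ K₂ : ℝ} {p q q₁ q₂ u v : R}

namespace IsTransvectionBound

variable {ι : Type*} [Fintype ι] [DecidableEq ι] {l : GroupSeminorm (SpecialLinearGroup ι R)}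
  {x : SpecialLinearGroup ι R} {i j : ι}

theorem map_mul_transvection_le (hC : IsTransvectionBound l C) (hij : i ≠ j) (b : R)
    (hx : l x ≤ K) : l (x * transvection hij b) ≤ K + C :=
  (map_mul_le_add l _ _).trans (add_le_add hx (hC ..))

theorem map_weylElement_le (hC : IsTransvectionBound l C) (hij : i ≠ j) :
    l (weylElement hij R) ≤ C + C + C :=
  hC.map_mul_transvection_le _ _ <| hC.map_mul_transvection_le _ _ <| hC ..

theorem map_weylElement_conj_le (hC : IsTransvectionBound l C) (hij : i ≠ j) (hx : l x ≤ K) :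
    l (weylElement hij R * x * (weylElement hij R)⁻¹) ≤ K + 6 * C := by
  have := map_mul_le_add l (weylElement hij R * x) (weylElement hij R)⁻¹
  have := map_mul_le_add l (weylElement hij R) x
  have := hC.map_weylElement_le hij
  rw [map_inv_eq_map] at *
  linarith

end IsTransvectionBound

theorem map_stabilization_le_of_mul_transvection (hC : IsTransvectionBound l C) {i j : Fin 2}
    (hij : i ≠ j) (t : R) {M : SpecialLinearGroup (Fin 2) R}
    (hM : l (stabilization (M * transvection hij (-t))) ≤ K) : l (stabilization M) ≤ K + C := by
  have hmul : M = M * transvection hij (-t) * transvection hij t := by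
    rw [mul_assoc, ← transvection_add, neg_add_cancel, transvection_coeff_zero, mul_one]
  rw [hmul, map_mul, stabilization_transvection]
  exact hC.map_mul_transvection_le _ _ hM

namespace TopRowBound

theorem one_left (hC : IsTransvectionBound l C) (q : R) :
    TopRowBound l 1 q (2 * C) := by
  intro M hp hq
  have hdet : M.1 0 0 * M.1 1 1 - M.1 0 1 * M.1 1 0 = 1 := by rw [← det_fin_two, M.det_coe]
  have hM : M = transvection one_ne_zero (M 1 0) * transvection zero_ne_one q := by
    apply Subtype.ext
    ext i j
    fin_cases i <;> fin_cases j <;> simp [transvection_coe, Matrix.mul_apply] <;> grind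
  rw [hM, map_mul, stabilization_transvection, stabilization_transvection, two_mul]
  exact (map_mul_le_add l _ _).trans (add_le_add (hC ..) (hC ..))

theorem add_left (hC : IsTransvectionBound l C) (h : TopRowBound l p q K) (t : R) :
    TopRowBound l (p + t * q) q (K + C) := fun M hp hq =>
  map_stabilization_le_of_mul_transvection hC one_ne_zero t <|
    h _ (by simp [transvection_coe, Matrix.mul_apply, hp, hq]; ring)
      (by simp [transvection_coe, Matrix.mul_apply, hq])

theorem add_right (hC : IsTransvectionBound l C) (h : TopRowBound l p q K) (t : R) :
    TopRowBound l p (q + t * p) (K + C) := fun M hp hq =>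
  map_stabilization_le_of_mul_transvection hC zero_ne_one t <|
    h _ (by simp [transvection_coe, Matrix.mul_apply, hp])
      (by simp [transvection_coe, Matrix.mul_apply, hp, hq]; ring)

theorem unit_add_mul (hC : IsTransvectionBound l C) (huv : u * v = 1) (t q : R) :
    TopRowBound l (u + t * q) q (5 * C) := by
  have h₁ : TopRowBound l (1 + (u - 1) * 1) 1 (2 * C + C) := (one_left hC 1).add_left hC (u - 1)
  rw [mul_one, add_sub_cancel] at h₁
  have h₂ : TopRowBound l u (1 + v * (q - 1) * u) (2 * C + C + C) := h₁.add_right hC _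
  rw [show 1 + v * (q - 1) * u = q by linear_combination (q - 1) * huv] at h₂
  convert h₂.add_left hC t using 1
  ring

theorem mul (hC : IsTransvectionBound l C) (h₁ : TopRowBound l p q₁ K₁)
    (h₂ : TopRowBound l p (-q₂) K₂) : TopRowBound l p (q₁ * q₂) (K₁ + K₂ + 16 * C) := by
  intro M hp hq
  have hdet : p * M 1 1 - q₁ * q₂ * M 1 0 = 1 := by rw [← hp, ← hq, ← det_fin_two, M.det_coe]
  let N₁ : SpecialLinearGroup (Fin 2) R :=
    ⟨!![p, q₁; q₂ * M 1 0, M 1 1], by rw [det_fin_two_of]; linear_combination hdet⟩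
  let N₂ : SpecialLinearGroup (Fin 2) R :=
    ⟨!![p, -q₂; -(q₁ * M 1 0), M 1 1], by rw [det_fin_two_of]; linear_combination hdet⟩
  have hN₁ : l (stabilization N₁) ≤ K₁ := h₁ N₁ rfl rfl
  have hN₂ : l (stabilization N₂) ≤ K₂ := h₂ N₂ rfl rfl
  rw [stabilization_eq_of_top_row_mul (N₁ := N₁) (N₂ := N₂)
    (by rw [← hp, ← hq]; exact eta_fin_two M.1) rfl rfl]
  have hprod := (map_mul_le_add l _ _).trans <| add_le_add
    (hC.map_mul_transvection_le (show (2 : Fin 3) ≠ 1 by decide) (M 1 0) <|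
      hC.map_weylElement_conj_le (zero_ne_one (α := Fin 3)) hN₂)
    (hC.map_weylElement_conj_le (show (0 : Fin 3) ≠ 2 by decide) hN₁)
  refine (hC.map_mul_transvection_le _ _ <| hC.map_mul_transvection_le _ _ <|
    hC.map_mul_transvection_le _ _ hprod).trans_eq ?_
  ring

end TopRowBound

theorem sq_eq_trace_smul_sub_one (M : SpecialLinearGroup (Fin 2) R) :
    M.1 * M.1 = M.1.trace • M.1 - 1 := by
  have hdet : M.1 0 0 * M.1 1 1 - M.1 0 1 * M.1 1 0 = 1 := by rw [← det_fin_two, M.det_coe]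
  rw [trace_fin_two]
  ext i j
  fin_cases i <;> fin_cases j <;> simp [Matrix.mul_apply] <;> grind

theorem exists_pow_eq_smul_one_add_smul (M : SpecialLinearGroup (Fin 2) R) (m : ℕ) :
    ∃ x y : R, x ^ 2 + M.1.trace * x * y + y ^ 2 = 1 ∧ (M ^ m).1 = x • 1 + y • M.1 := by
  induction m with
  | zero => exact ⟨1, 0, by ring, by simp⟩
  | succ m ih =>
    obtain ⟨x, y, hxy, hM⟩ := ih
    refine ⟨-y, x + M.1.trace * y, by linear_combination hxy, ?_⟩
    rw [pow_succ, coe_mul, hM, add_mul, smul_mul_assoc, smul_mul_assoc, one_mul,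
      sq_eq_trace_smul_sub_one]
    module

/-- With `M ^ m = x + y M`, the top row of `M ^ (2 m)` is `(x² - y² + M₀₀ y z, y z M₀₁)` where
`z = 2 x + y tr M`. -/
theorem map_stabilization_pow_two_mul_le (hC : IsTransvectionBound l C)
    (M : SpecialLinearGroup (Fin 2) R) (m : ℕ) {t : R} (huv : u * v = 1)
    (hM : (M ^ (2 * m)) 0 0 = u + t * M 0 1) : l (stabilization (M ^ (2 * m))) ≤ 48 * C := by
  obtain ⟨x, y, hxy, hpow⟩ := exists_pow_eq_smul_one_add_smul M m
  set z := 2 * x + M.1.trace * y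
  have hsq : (M ^ (2 * m)).1 = (x ^ 2 - y ^ 2) • 1 + (y * z) • M.1 := by
    rw [two_mul, pow_add, coe_mul, hpow, add_mul, mul_add, mul_add, smul_mul_smul,
      smul_mul_smul, smul_mul_smul, smul_mul_smul, sq_eq_trace_smul_sub_one, mul_one, mul_one,
      one_mul]
    module
  have h00 : (M ^ (2 * m)) 0 0 = x ^ 2 - y ^ 2 + M 0 0 * (y * z) := by
    rw [hsq]
    simp [mul_comm (M 0 0)]
  have h01 : (M ^ (2 * m)) 0 1 = y * z * M 0 1 := by
    rw [hsq]
    simp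
  have hy : TopRowBound l (x ^ 2 - y ^ 2) y (5 * C) := by
    convert TopRowBound.unit_add_mul hC (one_mul 1) (-(M.1.trace * x) - 2 * y) y using 1
    linear_combination hxy
  have hz' : TopRowBound l (x ^ 2 - y ^ 2) (-z) (5 * C) := by
    convert TopRowBound.unit_add_mul hC (u := -1) (v := -1) (by ring) (-x) (-z) using 1
    linear_combination -hxy
  have hyz : TopRowBound l ((M ^ (2 * m)) 0 0) (y * z) _ :=
    h00 ▸ (hy.mul hC hz').add_left hC (M 0 0)
  have hM01 : TopRowBound l ((M ^ (2 * m)) 0 0) (-M 0 1) (5 * C) := by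
    convert TopRowBound.unit_add_mul hC huv (-t) (-M 0 1) using 1
    rw [hM, neg_mul_neg]
  refine (hyz.mul hC hM01 _ rfl h01).trans_eq ?_
  ring

theorem exists_forall_pow_apply_zero_zero_eq [Ring.HasFiniteQuotients R]
    (M : SpecialLinearGroup (Fin 2) R) :
    ∃ N ≥ 1, ∀ k, ∃ u v t : R, u * v = 1 ∧ (M ^ (N * k)) 0 0 = u + t * M 0 1 := by
  by_cases hb : M 0 1 = 0
  · refine ⟨1, le_rfl, fun k => ?_⟩
    obtain ⟨x, y, -, hpow⟩ := exists_pow_eq_smul_one_add_smul M (1 * k)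
    refine ⟨(M ^ (1 * k)) 0 0, (M ^ (1 * k)) 1 1, 0, ?_, by ring⟩
    have hdet := (M ^ (1 * k)).det_coe
    rwa [det_fin_two, hpow, show (x • 1 + y • M.1) 0 1 = 0 by simp [hb], zero_mul, sub_zero,
      ← hpow] at hdet
  · let φ := SpecialLinearGroup.map (n := Fin 2) (Ideal.Quotient.mk (Ideal.span {M 0 1}))
    have : Finite (R ⧸ Ideal.span {M 0 1}) :=
      Ring.HasFiniteQuotients.finiteQuotient (by simpa using hb)
    have : Finite (SpecialLinearGroup (Fin 2) (R ⧸ Ideal.span {M 0 1})) := Subtype.finite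
    refine ⟨orderOf (φ M), orderOf_pos _, fun k => ?_⟩
    have hφ : φ (M ^ (orderOf (φ M) * k)) = 1 := by
      rw [map_pow, pow_mul, pow_orderOf_eq_one, one_pow]
    have hmk : Ideal.Quotient.mk (Ideal.span {M 0 1}) ((M ^ (orderOf (φ M) * k)) 0 0) = 1 :=
      congr($hφ 0 0).trans (by simp)
    rw [← map_one (Ideal.Quotient.mk (Ideal.span {M 0 1})), Ideal.Quotient.eq,
      Ideal.mem_span_singleton'] at hmk
    obtain ⟨t, ht⟩ := hmk
    exact ⟨1, 1, t, one_mul 1, by rw [ht]; ring⟩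

theorem hasZeroTranslationLength_stabilization [Ring.HasFiniteQuotients R]
    (hC : IsTransvectionBound l C) (M : SpecialLinearGroup (Fin 2) R) :
    HasZeroTranslationLength l (stabilization M) := by
  obtain ⟨N, hN, hpow⟩ := exists_forall_pow_apply_zero_zero_eq M
  refine hasZeroTranslationLength_of_bounded_pow (N := 2 * N) (C := 48 * C) (by lia) fun k => ?_
  obtain ⟨u, v, t, huv, hu⟩ := hpow (2 * k)
  rw [mul_left_comm] at hu
  rw [← map_pow, mul_assoc]
  exact map_stabilization_pow_two_mul_le hC M _ huv hu

theorem IsQuasiTreeSeminorm.exists_stabilization_le [Module.Finite ℤ R]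
    [Ring.HasFiniteQuotients R] [Group.FG (SpecialLinearGroup (Fin 2) R)]
    (hl : IsQuasiTreeSeminorm l) : ∃ B, ∀ M, l (stabilization M) ≤ B := by
  obtain ⟨C, hC⟩ := hl.exists_isTransvectionBound (by simp)
  exact (hl.comp stabilization).bounded fun M =>
    hasZeroTranslationLength_comp_iff.2 (hasZeroTranslationLength_stabilization hC M)

end SL2

/-! ### Finite generation of `SL₂` -/

theorem fg_of_isCancelSMul_of_eqvGen {Γ Y : Type*} [Group Γ] [MulAction Γ Y] [IsCancelSMul Γ Y]
    [Nonempty Y] [Finite (MulAction.orbitRel.Quotient Γ Y)] {r : Y → Y → Prop}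
    (hsmul : ∀ (γ : Γ) y y', r y y' → r (γ • y) (γ • y')) (hfin : ∀ y, {y' | r y y'}.Finite)
    (hconn : ∀ y y', Relation.EqvGen r y y') : Group.FG Γ := by
  let Ω := MulAction.orbitRel.Quotient Γ Y
  have hrep (y : Y) : ∃ (γ : Γ) (ω : Ω), y = γ • ω.out := by
    obtain ⟨γ, hγ⟩ := MulAction.orbitRel_apply.1 (Quotient.mk_out (s := MulAction.orbitRel Γ Y) y)
    exact ⟨γ⁻¹, _, eq_inv_smul_iff.2 hγ⟩
  let F : Set Γ := ⋃ (ω : Ω) (ω' : Ω), {γ | r ω.out (γ • ω'.out)}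
  have hF : F.Finite := Set.finite_iUnion fun ω => Set.finite_iUnion fun ω' =>
    (hfin ω.out).preimage fun γ _ γ' _ h => IsCancelSMul.right_cancel γ γ' _ h
  have hlink {γ γ' : Γ} {ω ω' : Ω} (h : r (γ • ω.out) (γ' • ω'.out)) :
      γ⁻¹ * γ' ∈ Subgroup.closure F := by
    refine Subgroup.subset_closure (Set.mem_iUnion₂.2 ⟨ω, ω', ?_⟩)
    simpa [mul_smul] using hsmul γ⁻¹ _ _ h
  have hmem {y y' : Y} (h : Relation.EqvGen r y y') : ∀ {γ γ' : Γ} {ω ω' : Ω}, y = γ • ω.out →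
      y' = γ' • ω'.out → γ⁻¹ * γ' ∈ Subgroup.closure F := by
    induction h with
    | rel _ _ h => rintro γ γ' ω ω' rfl rfl; exact hlink h
    | refl y =>
      rintro γ γ' ω ω' rfl h
      obtain rfl : ω = ω' := by
        rw [← ω.out_eq, ← ω'.out_eq]
        exact Quotient.sound (MulAction.orbitRel_apply.2 ⟨γ⁻¹ * γ', by simp [mul_smul, ← h]⟩)
      simp [IsCancelSMul.right_cancel _ _ _ h]
    | symm _ _ _ ih =>
      intro γ γ' ω ω' hy hy'
      simpa using inv_mem (ih hy' hy)
    | trans _ y _ _ _ ih₁ ih₂ =>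
      intro γ γ' ω ω' hy hy'
      obtain ⟨δ, υ, hδ⟩ := hrep y
      simpa using mul_mem (ih₁ hy hδ) (ih₂ hδ hy')
  refine Group.fg_iff.2 ⟨F, eq_top_iff.2 fun γ _ => ?_, hF⟩
  obtain ⟨ω⟩ : Nonempty Ω := ‹Nonempty Y›.map (Quotient.mk _)
  simpa using hmem (hconn ω.out (γ • ω.out)) (one_smul _ _).symm rfl

section DetFrame

open Matrix

variable {n R : Type*} [Fintype n] [DecidableEq n] [CommRing R] {D : Set R} {𝓕 : Set (Matrix n n R)}

/-- The square matrices with determinant in `D`, on which `SL(n, R)` acts by left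
multiplication. Over a domain the action is free as soon as `0 ∉ D`. -/
def DetFrame (n : Type*) [Fintype n] [DecidableEq n] {R : Type*} [CommRing R] (D : Set R) :
    Type _ :=
  {W : Matrix n n R // W.det ∈ D}

namespace DetFrame

instance : MulAction (SpecialLinearGroup n R) (DetFrame n D) where
  smul γ W := ⟨γ.1 * W.1, by rw [det_mul, γ.2, one_mul]; exact W.2⟩
  one_smul W := Subtype.ext (one_mul W.1)
  mul_smul γ γ' W := Subtype.ext (mul_assoc γ.1 γ'.1 W.1)

theorem coe_smul (γ : SpecialLinearGroup n R) (W : DetFrame n D) : (γ • W).1 = γ.1 * W.1 := rfl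

/-- The edges `W — W'` with `W⁻¹ W'`, cleared of denominators, in `𝓕`. -/
def Link (𝓕 : Set (Matrix n n R)) (W W' : DetFrame n D) : Prop := W.1.adjugate * W'.1 ∈ 𝓕

theorem Link.smul (γ : SpecialLinearGroup n R) {W W' : DetFrame n D} (h : Link 𝓕 W W') :
    Link 𝓕 (γ • W) (γ • W') := by
  have hγ : (γ.1 * W.1).adjugate * (γ.1 * W'.1) = W.1.adjugate * W'.1 := by
    rw [adjugate_mul_distrib, mul_assoc, ← mul_assoc γ.1.adjugate, adjugate_mul, γ.2, one_smul,
      one_mul]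
  rwa [Link, coe_smul, coe_smul, hγ]

variable [IsDomain R]

theorem isRegular_coe (h0 : 0 ∉ D) (W : DetFrame n D) : IsRegular W.1 :=
  isRegular_of_isLeftRegular_det (IsRegular.of_ne_zero (ne_of_mem_of_not_mem W.2 h0)).left

theorem isCancelSMul (h0 : 0 ∉ D) : IsCancelSMul (SpecialLinearGroup n R) (DetFrame n D) where
  left_cancel' γ _ _ h := smul_left_cancel γ h
  right_cancel' _ _ W h := Subtype.ext ((isRegular_coe h0 W).right congr($h.1))

theorem finite_setOf_link (h0 : 0 ∉ D) (h𝓕 : 𝓕.Finite) (W : DetFrame n D) :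
    {W' | Link 𝓕 W W'}.Finite := by
  have hadj : IsRegular W.1.adjugate := by
    refine isRegular_of_isLeftRegular_det (IsRegular.of_ne_zero ?_).left
    rw [det_adjugate]
    exact pow_ne_zero _ (ne_of_mem_of_not_mem W.2 h0)
  exact h𝓕.preimage fun _ _ _ _ h => Subtype.ext (hadj.left h)

end DetFrame

theorem exists_specialLinearGroup_mul_eq [IsDomain R] {W W' : Matrix n n R}
    (hdet : W.det = W'.det) (h0 : W'.det ≠ 0) (hdvd : ∀ i j, W'.det ∣ W i j - W' i j) :
    ∃ γ : SpecialLinearGroup n R, γ.1 * W' = W := by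
  choose Z hZ using hdvd
  have hmul : (1 + of Z * W'.adjugate) * W' = W := by
    rw [add_mul, one_mul, mul_assoc, adjugate_mul, mul_smul_one]
    ext i j
    simp [← hZ]
  refine ⟨⟨1 + of Z * W'.adjugate, mul_right_cancel₀ h0 ?_⟩, hmul⟩
  rw [← det_mul, hmul, hdet, one_mul]

theorem exists_finite_subset_forall_exists_mul_eq [IsDomain R] [Ring.HasFiniteQuotients R]
    (hD : D.Finite) (h0 : 0 ∉ D) {S : Set (Matrix n n R)} (hS : ∀ W ∈ S, W.det ∈ D) :
    ∃ T ⊆ S, T.Finite ∧ ∀ W ∈ S, ∃ W' ∈ T, ∃ γ : SpecialLinearGroup n R, γ.1 * W' = W := by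
  let m := ∏ d ∈ hD.toFinset, d
  have hm : m ≠ 0 := Finset.prod_ne_zero_iff.2 fun d hd =>
    ne_of_mem_of_not_mem (hD.mem_toFinset.1 hd) h0
  have : Finite (R ⧸ Ideal.span {m}) := Ring.HasFiniteQuotients.finiteQuotient (by simpa using hm)
  let f (W : Matrix n n R) := (W.det, W.map (Ideal.Quotient.mk (Ideal.span {m})))
  obtain ⟨T, hTS, hinj, himage⟩ := (Set.surjOn_image f S).exists_subset_injOn_image_eq
  have hfin : (f '' S).Finite := (hD.prod Set.finite_univ).subset <|
    Set.image_subset_iff.2 fun W hW => ⟨hS W hW, trivial⟩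
  refine ⟨T, hTS, .of_finite_image (himage ▸ hfin) hinj, fun W hW => ?_⟩
  obtain ⟨W', hW', hf⟩ : f W ∈ f '' T := himage ▸ Set.mem_image_of_mem f hW
  have hW'D : W'.det ∈ D := hS W' (hTS hW')
  refine ⟨W', hW', exists_specialLinearGroup_mul_eq congr($hf.1).symm
    (ne_of_mem_of_not_mem hW'D h0) fun i j => ?_⟩
  have hmod : Ideal.Quotient.mk (Ideal.span {m}) (W i j) = Ideal.Quotient.mk _ (W' i j) :=
    congr($hf.2 i j).symm
  rw [Ideal.Quotient.eq, Ideal.mem_span_singleton] at hmod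
  exact (Finset.dvd_prod_of_mem _ (hD.mem_toFinset.2 hW'D)).trans hmod

theorem specialLinearGroup_fg_of_eqvGen_link [IsDomain R] [Ring.HasFiniteQuotients R]
    (hD : D.Finite) (h0 : 0 ∉ D) [Nonempty (DetFrame n D)] (h𝓕 : 𝓕.Finite)
    (hconn : ∀ W W' : DetFrame n D, Relation.EqvGen (DetFrame.Link 𝓕) W W') :
    Group.FG (SpecialLinearGroup n R) := by
  have := DetFrame.isCancelSMul (n := n) h0
  have : Finite (MulAction.orbitRel.Quotient (SpecialLinearGroup n R) (DetFrame n D)) := by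
    obtain ⟨T, hTD, hT, hrep⟩ := exists_finite_subset_forall_exists_mul_eq hD h0
      (S := {W : Matrix n n R | W.det ∈ D}) fun _ => id
    have := hT.to_subtype
    refine Finite.of_surjective
      (fun W : T => (Quotient.mk _ (⟨W.1, hTD W.2⟩ : DetFrame n D))) ?_
    rintro ⟨W⟩
    obtain ⟨W', hW', γ, hγ⟩ := hrep W.1 W.2
    exact ⟨⟨W', hW'⟩, Quotient.sound (MulAction.orbitRel_apply.2 ⟨γ⁻¹,
      inv_smul_eq_iff.2 (Subtype.ext hγ.symm)⟩)⟩
  exact fg_of_isCancelSMul_of_eqvGen (fun γ _ _ => .smul γ) (DetFrame.finite_setOf_link h0 h𝓕)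
    hconn

end DetFrame

section DetFrame

open Matrix
open scoped Pointwise

variable {R : Type*} [CommRing R] {D : Set R} {𝓕 : Set (Matrix (Fin 2) (Fin 2) R)}

/-- The subgroup of upper triangular matrices of `SL(2, R)`. -/
def upperTriangular (R : Type*) [CommRing R] : Subgroup (SpecialLinearGroup (Fin 2) R) where
  carrier := {g | g.1 1 0 = 0}
  one_mem' := by simp
  mul_mem' {g h} (hg : g.1 1 0 = 0) (hh : h.1 1 0 = 0) := by simp [mul_apply, hg, hh]
  inv_mem' {g} (hg : g.1 1 0 = 0) := by simp [adjugate_fin_two, hg]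

theorem mem_upperTriangular {g : SpecialLinearGroup (Fin 2) R} :
    g ∈ upperTriangular R ↔ g.1 1 0 = 0 := Iff.rfl

/-- The homomorphism `u ↦ diag(u, u⁻¹)`. -/
def diagonalHom (R : Type*) [CommRing R] : Rˣ →* SpecialLinearGroup (Fin 2) R where
  toFun u := ⟨!![(u : R), 0; 0, (u⁻¹ : Rˣ)], by simp⟩
  map_one' := Subtype.ext (by simp [one_fin_two])
  map_mul' u v := Subtype.ext <|
    show !![((u * v : Rˣ) : R), 0; 0, ((u * v)⁻¹ : Rˣ)] =
      !![(u : R), 0; 0, (u⁻¹ : Rˣ)] * !![(v : R), 0; 0, (v⁻¹ : Rˣ)] by simp [mul_comm]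

theorem coe_diagonalHom (u : Rˣ) : (diagonalHom R u).1 = !![(u : R), 0; 0, (u⁻¹ : Rˣ)] := rfl

theorem upperTriangular_eq_sup : upperTriangular R =
    (diagonalHom R).range ⊔ (transvectionHom (R := R) (zero_ne_one (α := Fin 2))).range := by
  refine le_antisymm (fun g hg => ?_) (sup_le ?_ ?_)
  · rw [mem_upperTriangular] at hg
    have hdet : g.1 0 0 * g.1 1 1 = 1 := by
      simpa only [det_fin_two, hg, mul_zero, sub_zero] using g.det_coe
    let u : Rˣ := ⟨g.1 0 0, g.1 1 1, hdet, by rw [mul_comm, hdet]⟩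
    have hfac : g = diagonalHom R u *
        transvectionHom zero_ne_one (.ofAdd (g.1 1 1 * g.1 0 1)) := by
      apply Subtype.ext
      ext i j
      fin_cases i <;> fin_cases j <;>
        simp [coe_diagonalHom, transvectionHom, SpecialLinearGroup.transvection_coe, mul_apply, u,
          hg, ← mul_assoc, hdet]
    rw [hfac]
    exact Subgroup.mul_mem_sup ⟨u, rfl⟩ ⟨_, rfl⟩
  · rintro _ ⟨u, rfl⟩
    simp [mem_upperTriangular, coe_diagonalHom]
  · rintro _ ⟨b, rfl⟩
    simp [mem_upperTriangular, transvectionHom, SpecialLinearGroup.transvection_coe]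

theorem upperTriangular_fg [Module.Finite ℤ R] [Group.FG Rˣ] : (upperTriangular R).FG := by
  have : AddGroup.FG R := Module.Finite.iff_addGroup_fg.1 inferInstance
  rw [upperTriangular_eq_sup]
  exact ((Group.fg_iff_subgroup_fg _).1 (Group.fg_range _)).sup
    ((Group.fg_iff_subgroup_fg _).1 (Group.fg_range _))

namespace DetFrame

/-- The right translate `W b` of a frame by an element of `SL(2, R)`. -/
def mulRight (W : DetFrame (Fin 2) D) (b : SpecialLinearGroup (Fin 2) R) : DetFrame (Fin 2) D :=
  ⟨W.1 * b.1, by rw [det_mul, b.2, mul_one]; exact W.2⟩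

theorem mulRight_mul (W : DetFrame (Fin 2) D) (b c : SpecialLinearGroup (Fin 2) R) :
    W.mulRight (b * c) = (W.mulRight b).mulRight c :=
  Subtype.ext (mul_assoc W.1 b.1 c.1).symm

theorem mulRight_one (W : DetFrame (Fin 2) D) : W.mulRight 1 = W :=
  Subtype.ext (mul_one W.1)

theorem eqvGen_link_mulRight {S : Set (SpecialLinearGroup (Fin 2) R)}
    (hS : ∀ d ∈ D, ∀ s ∈ S, d • s.1 ∈ 𝓕) {b : SpecialLinearGroup (Fin 2) R}
    (hb : b ∈ Subgroup.closure S) (W : DetFrame (Fin 2) D) :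
    Relation.EqvGen (Link 𝓕) W (W.mulRight b) := by
  induction hb using Subgroup.closure_induction generalizing W with
  | mem s hs =>
    refine .rel _ _ ?_
    rw [Link, mulRight, ← mul_assoc, adjugate_mul, smul_mul_assoc, one_mul]
    exact hS _ W.2 s hs
  | one => rw [mulRight_one]; exact .refl W
  | mul b c _ _ hb hc => rw [mulRight_mul]; exact .trans _ _ _ (hb W) (hc _)
  | inv b _ hb => simpa [← mulRight_mul, mulRight_one] using (hb (W.mulRight b⁻¹)).symm

variable [IsDomain R] [Ring.HasFiniteQuotients R]

theorem exists_finite_forall_exists_link_mulRight (hD : D.Finite) (h0 : 0 ∉ D) :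
    ∃ T : Set (Matrix (Fin 2) (Fin 2) R), T.Finite ∧ ∀ W W' : DetFrame (Fin 2) D,
      W.1 0 0 * W'.1 1 0 = W.1 1 0 * W'.1 0 0 →
        ∃ b ∈ upperTriangular R, Link T (W.mulRight b) W' := by
  have h0' : (0 : R) ∉ D * D := by
    rintro ⟨x, hx, y, hy, hxy⟩
    exact (mul_eq_zero.1 hxy).elim (ne_of_mem_of_not_mem hx h0) (ne_of_mem_of_not_mem hy h0)
  obtain ⟨T, hTS, hT, hrep⟩ := exists_finite_subset_forall_exists_mul_eq (hD.mul hD) h0'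
    (S := {A : Matrix (Fin 2) (Fin 2) R | A 1 0 = 0 ∧ A.det ∈ D * D}) fun A hA => hA.2
  refine ⟨T, hT, fun W W' hline => ?_⟩
  have hdet : (W.1.adjugate * W'.1).det ∈ D * D := by
    simpa [det_adjugate] using Set.mul_mem_mul W.2 W'.2
  have htriangular : (W.1.adjugate * W'.1) 1 0 = 0 := by
    simp [adjugate_fin_two, mul_apply, hline]
  obtain ⟨A, hA, b, hb⟩ := hrep _ ⟨htriangular, hdet⟩
  have hA0 : A 0 0 ≠ 0 := by
    intro h
    have hAD := (hTS hA).2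
    rw [det_fin_two, h, (hTS hA).1] at hAD
    exact h0' (by simpa using hAD)
  have hbA : b.1 1 0 * A 0 0 = 0 := by
    rw [← hb, mul_apply] at htriangular
    simpa [(hTS hA).1] using htriangular
  refine ⟨b, mem_upperTriangular.2 ((mul_eq_zero.1 hbA).resolve_right hA0), ?_⟩
  rwa [Link, mulRight, adjugate_mul_distrib, mul_assoc, ← hb, ← mul_assoc, adjugate_mul, b.2,
    one_smul, one_mul]

theorem exists_finite_forall_eqvGen_link [Module.Finite ℤ R] [Group.FG Rˣ] (hD : D.Finite)
    (h0 : 0 ∉ D) :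
    ∃ 𝓕 : Set (Matrix (Fin 2) (Fin 2) R), 𝓕.Finite ∧ ∀ W W' : DetFrame (Fin 2) D,
      W.1 0 0 * W'.1 1 0 = W.1 1 0 * W'.1 0 0 → Relation.EqvGen (Link 𝓕) W W' := by
  obtain ⟨S, hS⟩ := upperTriangular_fg (R := R)
  obtain ⟨T, hT, hlink⟩ := exists_finite_forall_exists_link_mulRight hD h0
  refine ⟨T ∪ Set.image2 (fun d (s : SpecialLinearGroup (Fin 2) R) => d • s.1) D S,
    hT.union (hD.image2 _ S.finite_toSet), fun W W' hline => ?_⟩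
  obtain ⟨b, hb, hbT⟩ := hlink W W' hline
  exact .trans _ _ _
    (eqvGen_link_mulRight (fun d hd s hs => .inr ⟨d, hd, s, hs, rfl⟩) (hS ▸ hb) W)
    (.rel _ _ (.inl hbT))

end DetFrame

end DetFrame

section QuasiEuclidean

open Matrix

variable {R : Type*} [CommRing R] {ν : R →* ℕ} {S : Finset R}

/-- A weak form of a Euclidean norm, satisfied by the absolute norm on every ring of integers:
division with remainder by `b ≠ 0` is possible once the dividend is multiplied by a factor from
the finite set `S`. -/
structure IsQuasiEuclideanNorm (ν : R →* ℕ) (S : Finset R) : Prop where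
  dvd_natCast : ∀ b, b ∣ (ν b : R)
  zero_notMem : 0 ∉ S
  exists_lt : ∀ a b, b ≠ 0 → ∃ r ∈ S, ∃ q, ν (r * a - q * b) < ν b

theorem exists_isQuasiEuclideanNorm (K : Type*) [Field K] [NumberField K] :
    ∃ (ν : 𝓞 K →* ℕ) (S : Finset (𝓞 K)), IsQuasiEuclideanNorm ν S := by
  classical
  let basis := Module.Free.chooseBasis ℤ (𝓞 K)
  refine ⟨(Int.natAbsHom : ℤ →* ℕ).comp (Algebra.norm ℤ),
    (ClassGroup.finsetApprox basis AbsoluteValue.absIsAdmissible).image (algebraMap ℤ (𝓞 K)),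
    ?_, ?_, ?_⟩
  · intro b
    have hmem := Ideal.absNorm_mem (Ideal.span {b})
    rwa [Ideal.absNorm_span_singleton, Ideal.mem_span_singleton] at hmem
  · intro h0
    obtain ⟨z, hz, hz0⟩ := Finset.mem_image.1 h0
    rw [FaithfulSMul.algebraMap_eq_zero_iff] at hz0
    exact ClassGroup.finsetApprox.zero_notMem _ _ (hz0 ▸ hz)
  · intro a b hb
    obtain ⟨q, r, hr, hlt⟩ :=
      ClassGroup.exists_mem_finset_approx' basis AbsoluteValue.absIsAdmissible a hb
    refine ⟨algebraMap ℤ _ r, Finset.mem_image_of_mem _ hr, q, ?_⟩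
    rw [Algebra.smul_def, AbsoluteValue.abs_apply, AbsoluteValue.abs_apply] at hlt
    exact Int.ofNat_lt.1 (by simpa using hlt)

theorem exists_finite_forall_dvd_exists_associated [IsDomain R] [Ring.HasFiniteQuotients R]
    {m : R} (hm : m ≠ 0) :
    ∃ D : Set R, D.Finite ∧ 0 ∉ D ∧ ∀ b, b ∣ m → ∃ d ∈ D, Associated b d := by
  let f (b : R) := Ideal.span {b}
  obtain ⟨D, hDm, hinj, himage⟩ := (Set.surjOn_image f {b | b ∣ m}).exists_subset_injOn_image_eq
  have hfin : (f '' {b | b ∣ m}).Finite := by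
    refine (Ring.HasFiniteQuotients.finite_setOfPred_mem m hm).subset (Set.image_subset_iff.2 ?_)
    exact fun b hb => Ideal.mem_span_singleton.2 hb
  refine ⟨D, .of_finite_image (himage ▸ hfin) hinj, fun h0 => hm (zero_dvd_iff.1 (hDm h0)),
    fun b hb => ?_⟩
  obtain ⟨d, hd, hdb⟩ : f b ∈ f '' D := himage ▸ Set.mem_image_of_mem f hb
  exact ⟨d, hd, Ideal.span_singleton_eq_span_singleton.1 hdb.symm⟩

namespace IsQuasiEuclideanNorm

theorem pos (hν : IsQuasiEuclideanNorm ν S) {b : R} (hb : b ≠ 0) : 0 < ν b := by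
  obtain ⟨_, -, _, hlt⟩ := hν.exists_lt 0 b hb
  exact pos_of_gt hlt

theorem exists_finite_forall_exists_lt [Ring.HasFiniteQuotients R]
    (hν : IsQuasiEuclideanNorm ν S) :
    ∃ P : Set (R × R), P.Finite ∧ P ⊆ (S : Set R) ×ˢ Set.univ ∧
      ∀ a b, b ≠ 0 → ∃ p ∈ P, ∃ y, ν (p.1 * (a - y * b) - p.2 * b) < ν b := by
  let f (r : R) : Set (R × R) := Set.range fun ω : R ⧸ Ideal.span {r} => (r, ω.out)
  have hfin (r) (hr : r ∈ (S : Set R)) : (f r).Finite := by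
    have : Finite (R ⧸ Ideal.span {r}) := Ring.HasFiniteQuotients.finiteQuotient <| by
      simpa using ne_of_mem_of_not_mem (Finset.mem_coe.1 hr) hν.zero_notMem
    exact Set.finite_range _
  refine ⟨⋃ r ∈ (S : Set R), f r, S.finite_toSet.biUnion hfin, ?_, fun a b hb => ?_⟩
  · exact Set.iUnion₂_subset fun r hr => Set.range_subset_iff.2 fun _ => ⟨hr, trivial⟩
  obtain ⟨r, hr, q, hlt⟩ := hν.exists_lt a b hb
  set q₀ := (Ideal.Quotient.mk (Ideal.span {r}) q).out
  obtain ⟨y, hy⟩ : r ∣ q - q₀ := by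
    rw [← Ideal.mem_span_singleton, ← Ideal.Quotient.eq, Ideal.Quotient.mk_out]
  refine ⟨(r, q₀), Set.mem_iUnion₂.2 ⟨r, hr, _, rfl⟩, y, ?_⟩
  convert hlt using 2
  linear_combination b * hy

theorem exists_mem_forall_dvd_prod_mul (hν : IsQuasiEuclideanNorm ν S) {I : Ideal R}
    (hI : I ≠ ⊥) : ∃ b ∈ I, b ≠ 0 ∧ ∀ x ∈ I, b ∣ (∏ r ∈ S, r) * x := by
  obtain ⟨b, ⟨hbI, hb⟩, hmin⟩ := exists_minimalFor_of_wellFoundedLT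
    (fun b => b ∈ I ∧ b ≠ 0) ν (Submodule.exists_mem_ne_zero_of_ne_bot hI)
  refine ⟨b, hbI, hb, fun x hx => ?_⟩
  obtain ⟨r, hr, q, hlt⟩ := hν.exists_lt x b hb
  have hzero : r * x - q * b = 0 := by
    by_contra hne
    exact (hmin ⟨I.sub_mem (I.mul_mem_left r hx) (I.mul_mem_left q hbI), hne⟩ hlt.le).not_gt hlt
  exact (Dvd.intro_left q (sub_eq_zero.1 hzero).symm).trans
    (mul_dvd_mul_right (Finset.dvd_prod_of_mem _ hr) x)

theorem exists_line_eq_and_dvd_factorial [IsDomain R] (hν : IsQuasiEuclideanNorm ν S) (a : R)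
    {c : R} (hc : c ≠ 0) : ∃ a₁ c₁ x y, a * c₁ = c * a₁ ∧ c₁ ≠ 0 ∧ ν c₁ ≤ ν c ∧
      x * a₁ + y * c₁ ∣ ((ν (∏ r ∈ S, r)).factorial : R) := by
  let M := ∏ r ∈ S, r
  have hM : M ≠ 0 := Finset.prod_ne_zero_iff.2 fun r hr => ne_of_mem_of_not_mem hr hν.zero_notMem
  obtain ⟨⟨a₁, c₁⟩, ⟨hc₁, hline⟩, hmin⟩ := exists_minimalFor_of_wellFoundedLT
    (fun v : R × R => v.2 ≠ 0 ∧ a * v.2 = c * v.1) (fun v => ν v.2) ⟨(a, c), hc, mul_comm a c⟩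
  have hle {a' c' : R} (hc' : c' ≠ 0) (h : a * c' = c * a') : ν c₁ ≤ ν c' :=
    (le_total _ _).elim (@hmin (a', c') ⟨hc', h⟩) id
  obtain ⟨b, hb, hb0, hdvd⟩ := hν.exists_mem_forall_dvd_prod_mul (I := Ideal.span {a₁, c₁})
    fun h => hc₁ (Ideal.span_eq_bot.1 h c₁ (by simp))
  obtain ⟨x, y, rfl⟩ := Ideal.mem_span_pair.1 hb
  set b := x * a₁ + y * c₁
  obtain ⟨a', ha'⟩ := hdvd a₁ (Ideal.subset_span (by simp))
  obtain ⟨c', hc'⟩ := hdvd c₁ (Ideal.subset_span (by simp))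
  have hc'0 : c' ≠ 0 := fun h => mul_ne_zero hM hc₁ (by rw [hc', h, mul_zero])
  have hline' : a * c' = c * a' := mul_left_cancel₀ hb0 <| by
    linear_combination M * hline - a * hc' + c * ha'
  have hbM : ν b ≤ ν M := by
    refine Nat.le_of_mul_le_mul_right ?_ (hν.pos hc'0)
    rw [← map_mul, ← hc', map_mul]
    exact Nat.mul_le_mul_left _ (hle hc'0 hline')
  exact ⟨a₁, c₁, x, y, hline, hc₁, hle hc (mul_comm a c), (hν.dvd_natCast b).trans
    (Nat.cast_dvd_cast (Nat.dvd_factorial (hν.pos hb0) hbM))⟩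

variable [IsDomain R] [Ring.HasFiniteQuotients R] [CharZero R]

theorem exists_finite_forall_exists_det_mem (hν : IsQuasiEuclideanNorm ν S) :
    ∃ D : Set R, D.Finite ∧ 0 ∉ D ∧ ∀ a c : R, c ≠ 0 → ∃ W : Matrix (Fin 2) (Fin 2) R,
      W.det ∈ D ∧ a * W 1 0 = c * W 0 0 ∧ W 1 0 ≠ 0 ∧ ν (W 1 0) ≤ ν c := by
  obtain ⟨D, hD, h0, hassoc⟩ := exists_finite_forall_dvd_exists_associated
    (m := ((ν (∏ r ∈ S, r)).factorial : R)) (Nat.cast_ne_zero.2 (Nat.factorial_ne_zero _))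
  refine ⟨D, hD, h0, fun a c hc => ?_⟩
  obtain ⟨a₁, c₁, x, y, hline, hc₁, hle, hdvd⟩ := hν.exists_line_eq_and_dvd_factorial a hc
  obtain ⟨d, hd, u, hu⟩ := hassoc _ hdvd
  refine ⟨!![a₁, -(y * u); c₁, x * u], ?_, hline, hc₁, hle⟩
  convert hd using 1
  rw [det_fin_two_of, ← hu]
  ring

theorem exists_descent (hν : IsQuasiEuclideanNorm ν S) :
    ∃ (D : Set R) (𝓕 : Set (Matrix (Fin 2) (Fin 2) R)), D.Finite ∧ 1 ∈ D ∧ 0 ∉ D ∧ 𝓕.Finite ∧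
      ∀ W : DetFrame (Fin 2) D, W.1 1 0 ≠ 0 → ∃ V U : DetFrame (Fin 2) D,
        W.1 0 0 * V.1 1 0 = W.1 1 0 * V.1 0 0 ∧ V.Link 𝓕 U ∧ ν (U.1 1 0) < ν (W.1 1 0) := by
  obtain ⟨D, hD, h0, hframe⟩ := hν.exists_finite_forall_exists_det_mem
  obtain ⟨P, hP, hPS, hdiv⟩ := hν.exists_finite_forall_exists_lt
  let E := insert 1 (D ∪ Set.image2 (fun r d => r * d) S D)
  have hDE : D ⊆ E := Set.subset_union_left.trans (Set.subset_insert _ _)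
  refine ⟨E, Set.image2 (fun d p => d • !![-p.2, -1; p.1, 0]) D P,
    (hD.union (S.finite_toSet.image2 _ hD)).insert 1, Set.mem_insert _ _, ?_, hD.image2 _ hP,
    fun W hW => ?_⟩
  · rintro (h | h | ⟨r, hr, d, hd, h⟩)
    · exact zero_ne_one h
    · exact h0 h
    · exact mul_ne_zero (ne_of_mem_of_not_mem (Finset.mem_coe.1 hr) hν.zero_notMem)
        (ne_of_mem_of_not_mem hd h0) h
  obtain ⟨V, hV, hline, hV0, hle⟩ := hframe _ _ hW
  obtain ⟨⟨r, q⟩, hp, y, hlt⟩ := hdiv (V 1 1) (V 1 0) hV0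
  let V' := V * !![1, -y; 0, 1]
  have hdetV' : V'.det = V.det := by simp [V']
  have hdetU : (V' * !![-q, -1; r, 0]).det = r * V.det := by simp [hdetV', mul_comm]
  refine ⟨⟨V', hdetV' ▸ hDE hV⟩, ⟨V' * !![-q, -1; r, 0], ?_⟩, ?_, ?_, ?_⟩
  · exact hdetU ▸ .inr (.inr ⟨r, (hPS hp).1, V.det, hV, rfl⟩)
  · simpa [V', mul_apply] using hline
  · refine ⟨V.det, hV, (r, q), hp, ?_⟩
    rw [← mul_assoc, adjugate_mul, hdetV', smul_mul_assoc, one_mul]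
  · refine lt_of_eq_of_lt ?_ (hlt.trans_le hle)
    congr 1
    simp only [V', mul_apply, Fin.sum_univ_two, of_apply, cons_val', cons_val_zero, cons_val_one,
      cons_val_fin_one]
    ring

end IsQuasiEuclideanNorm

theorem IsQuasiEuclideanNorm.specialLinearGroup_fin_two_fg [IsDomain R] [CharZero R]
    [Ring.HasFiniteQuotients R] [Module.Finite ℤ R] [Group.FG Rˣ]
    (hν : IsQuasiEuclideanNorm ν S) : Group.FG (SpecialLinearGroup (Fin 2) R) := by
  obtain ⟨D, 𝓕, hD, h1, h0, h𝓕, hdescent⟩ := hν.exists_descent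
  obtain ⟨𝓕', h𝓕', hline⟩ := DetFrame.exists_finite_forall_eqvGen_link hD h0
  let I : DetFrame (Fin 2) D := ⟨1, by simpa using h1⟩
  have : Nonempty (DetFrame (Fin 2) D) := ⟨I⟩
  have hline {W W' : DetFrame (Fin 2) D} (h : W.1 0 0 * W'.1 1 0 = W.1 1 0 * W'.1 0 0) :
      Relation.EqvGen (DetFrame.Link (𝓕 ∪ 𝓕')) W W' := (hline W W' h).mono fun _ _ => .inr
  have hconn (W : DetFrame (Fin 2) D) : Relation.EqvGen (DetFrame.Link (𝓕 ∪ 𝓕')) W I := by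
    induction hk : ν (W.1 1 0) using Nat.strong_induction_on generalizing W with
    | _ k ih =>
      by_cases hW : W.1 1 0 = 0
      · exact hline (by simp [I, hW])
      · obtain ⟨V, U, hWV, hVU, hlt⟩ := hdescent W hW
        exact .trans _ _ _ (hline hWV) (.trans _ _ _ (.rel _ _ (.inl hVU)) (ih _ (hk ▸ hlt) U rfl))
  exact specialLinearGroup_fg_of_eqvGen_link hD h0 (h𝓕.union h𝓕') fun W W' =>
    (hconn W).trans _ _ _ (hconn W').symm

theorem specialLinearGroup_fin_two_ringOfIntegers_fg (K : Type*) [Field K] [NumberField K] :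
    Group.FG (SpecialLinearGroup (Fin 2) (𝓞 K)) := by
  have : Group.FG (𝓞 K)ˣ := Group.fg_iff_monoid_fg.2 inferInstance
  obtain ⟨ν, S, hν⟩ := exists_isQuasiEuclideanNorm K
  exact hν.specialLinearGroup_fin_two_fg

end QuasiEuclidean

/-! ### Stable range and reduction to `SL₂` -/

section StableRange

variable {R : Type*} [CommRing R]

theorem exists_pow_mul_one_sub_pow_mem (I : Ideal R) [Finite (R ⧸ I)] (b : R) :
    ∃ i m : ℕ, m ≠ 0 ∧ b ^ i * (1 - b ^ m) ∈ I := by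
  obtain ⟨i, -, j, -, hij, heq⟩ := Set.infinite_univ.exists_lt_map_eq_of_mapsTo
    (f := fun k : ℕ => Ideal.Quotient.mk I (b ^ k)) (Set.mapsTo_univ _ _) Set.finite_univ
  obtain ⟨m, rfl⟩ := Nat.exists_eq_add_of_lt hij
  refine ⟨i, m + 1, m.succ_ne_zero, ?_⟩
  convert Ideal.Quotient.eq.1 heq using 1
  ring

theorem mem_of_add_one_sub_pow_mul_mem {p : Ideal R} [p.IsPrime] {a b : R} {i m : ℕ} (hm : m ≠ 0)
    (hpow : b ^ i * (1 - b ^ m) ∈ p) (hadd : b + (1 - b ^ m) * a ∈ p) : a ∈ p := by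
  have hb : b ∈ p := by
    obtain h | h := Ideal.IsPrime.mem_or_mem ‹_› hpow
    · exact Ideal.IsPrime.mem_of_pow_mem ‹_› i h
    · simpa using p.sub_mem hadd (p.mul_mem_right a h)
  have ha : a = b + (1 - b ^ m) * a - b + b ^ m * a := by ring
  rw [ha]
  exact p.add_mem (p.sub_mem hadd hb) (p.mul_mem_right a (Ideal.pow_mem_of_mem p hb m hm.bot_lt))

/-- One entry of `v` is moved to a nonzero `c`. As `R / c` is finite, another entry `b` satisfies
`b ^ i = b ^ (i + m)` modulo `c`. Hence modulo a prime containing `c`, `1 - b ^ m` is `1` or `0`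
according to whether `b` vanishes, and `b + (1 - b ^ m) * a` vanishes only if `a` does. -/
theorem exists_forall_isPrime_mem {ι : Type*} [Nontrivial ι] [Ring.HasFiniteQuotients R] {a : R}
    (ha : a ≠ 0) (v : ι → R) :
    ∃ t : ι → R, ∀ p : Ideal R, p.IsPrime → (∀ i, v i + a * t i ∈ p) → a ∈ p := by
  classical
  obtain ⟨i, j, hij⟩ := exists_pair_ne ι
  obtain ⟨s, hs⟩ : ∃ s, v i + a * s ≠ 0 := by
    by_cases hi : v i = 0
    · exact ⟨1, by simpa [hi] using ha⟩
    · exact ⟨0, by simpa using hi⟩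
  have : Finite (R ⧸ Ideal.span {v i + a * s}) :=
    Ring.HasFiniteQuotients.finiteQuotient (by simpa using hs)
  obtain ⟨e, m, hm, hpow⟩ := exists_pow_mul_one_sub_pow_mem (Ideal.span {v i + a * s}) (v j)
  refine ⟨Function.update (fun _ => 1 - v j ^ m) i s, fun p _ hp => ?_⟩
  have hi : v i + a * s ∈ p := by simpa using hp i
  have hj : v j + (1 - v j ^ m) * a ∈ p := by simpa [hij.symm, mul_comm] using hp j
  exact mem_of_add_one_sub_pow_mul_mem hm ((Ideal.span_singleton_le_iff_mem p).2 hi hpow) hj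

theorem exists_dotProduct_add_smul_eq_one {ι : Type*} [Fintype ι] [Nontrivial ι]
    [Ring.HasFiniteQuotients R] {a x₀ : R} {x v : ι → R} (h : x₀ * a + x ⬝ᵥ v = 1) :
    ∃ t y : ι → R, y ⬝ᵥ (v + a • t) = 1 := by
  by_cases ha : a = 0
  · exact ⟨0, x, by simpa [ha] using h⟩
  obtain ⟨t, ht⟩ := exists_forall_isPrime_mem ha v
  have htop : Ideal.span (Set.range (v + a • t)) = ⊤ := by
    by_contra hne
    obtain ⟨p, hp, hle⟩ := Ideal.exists_le_maximal _ hne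
    have hmem (i : ι) : v i + a * t i ∈ p := hle (Ideal.subset_span ⟨i, rfl⟩)
    have hap : a ∈ p := ht p hp.isPrime hmem
    have hvp (i : ι) : v i ∈ p := by simpa using p.sub_mem (hmem i) (p.mul_mem_right (t i) hap)
    refine hp.ne_top (p.eq_top_iff_one.2 (h ▸ ?_))
    exact p.add_mem (p.mul_mem_left _ hap) (p.sum_mem fun i _ => p.mul_mem_left _ (hvp i))
  obtain ⟨y, hy⟩ := Ideal.mem_span_range_iff_exists_fun.1 (htop ▸ Submodule.mem_top (x := (1 : R)))
  exact ⟨t, y, hy⟩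

end StableRange

section Reduction

open Matrix Matrix.SpecialLinearGroup

variable {R : Type*} [CommRing R] {k : ℕ} {B C : ℝ}

theorem seminorm_prod_le_card_mul {A G ι : Type*} [CommGroup A] [Group G] (l : GroupSeminorm G)
    (f : A →* G) (s : Finset ι) (u : ι → A) (hu : ∀ i, l (f (u i)) ≤ C) :
    l (f (∏ i ∈ s, u i)) ≤ s.card * C := by
  classical
  induction s using Finset.induction_on with
  | empty => simp
  | insert i s hi ih =>
    rw [Finset.prod_insert hi, map_mul, Finset.card_insert_of_notMem hi]
    push_cast
    linarith [map_mul_le_add l (f (u i)) (f (∏ i ∈ s, u i)), hu i]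

theorem seminorm_le_card_mul_of_single {G ι : Type*} [Group G] [Fintype ι] [DecidableEq ι]
    (l : GroupSeminorm G) (f : Multiplicative (ι → R) →* G)
    (hf : ∀ i b, l (f (.ofAdd (Pi.single i b))) ≤ C) (t : Multiplicative (ι → R)) :
    l (f t) ≤ Fintype.card ι * C := by
  have ht : t = ∏ i, .ofAdd (Pi.single i (t.toAdd i)) := by
    rw [← ofAdd_sum, Finset.univ_sum_single, ofAdd_toAdd]
  rw [ht]
  exact seminorm_prod_le_card_mul l f Finset.univ _ fun i => hf i _

theorem exists_rowUnipotent_mul_columnUnipotent_mul_apply_zero_zero [Ring.HasFiniteQuotients R]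
    (hk : 2 ≤ k) (g : SpecialLinearGroup (Fin (k + 1)) R) :
    ∃ y t : Multiplicative (Fin k → R), (rowUnipotent y * (columnUnipotent t * g)) 0 0 = 1 := by
  have : Nontrivial (Fin k) := Fin.nontrivial_iff_two_le.2 hk
  have hinv : g⁻¹ 0 0 * g 0 0 + (fun j : Fin k => g⁻¹ 0 j.succ) ⬝ᵥ (fun j => g j.succ 0) = 1 := by
    have : (g⁻¹ * g) 0 0 = 1 := by simp
    rwa [coe_mul, Matrix.mul_apply, Fin.sum_univ_succ] at this
  obtain ⟨t, y, hy⟩ := exists_dotProduct_add_smul_eq_one hinv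
  refine ⟨.ofAdd ((1 - g 0 0) • y), .ofAdd t, ?_⟩
  rw [coe_mul, coe_mul, coe_rowUnipotent, coe_columnUnipotent, eq_borderedMatrix g.1,
    borderedMatrix_mul, borderedMatrix_mul]
  rw [add_comm] at hy
  simp [-dotProduct_add, hy]

theorem IsTransvectionBound.le_of_stabilization_le [Ring.HasFiniteQuotients R]
    {l : GroupSeminorm (SpecialLinearGroup (Fin (k + 1)) R)} (hC : IsTransvectionBound l C)
    (hk : 2 ≤ k) (hB : ∀ h, l (stabilization h) ≤ B) (g : SpecialLinearGroup (Fin (k + 1)) R) :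
    l g ≤ B + 4 * (k * C) := by
  have hcol (t : Multiplicative (Fin k → R)) : l (columnUnipotent t) ≤ k * C := by
    simpa using seminorm_le_card_mul_of_single l columnUnipotent
      (fun j b => columnUnipotent_single j b ▸ hC _ _ _ b) t
  have hrow (t : Multiplicative (Fin k → R)) : l (rowUnipotent t) ≤ k * C := by
    simpa using seminorm_le_card_mul_of_single l rowUnipotent
      (fun j b => rowUnipotent_single j b ▸ hC _ _ _ b) t
  obtain ⟨y, t, h⟩ := exists_rowUnipotent_mul_columnUnipotent_mul_apply_zero_zero hk g
  obtain ⟨v, h, w, heq⟩ := exists_eq_columnUnipotent_mul_stabilization_mul_rowUnipotent h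
  have hg : g = columnUnipotent t⁻¹ *
      (rowUnipotent y⁻¹ * (columnUnipotent v * stabilization h * rowUnipotent w)) := by
    rw [← heq, map_inv, map_inv]
    group
  calc l g ≤ l (columnUnipotent t⁻¹) + (l (rowUnipotent y⁻¹) +
        (l (columnUnipotent v) + l (stabilization h) + l (rowUnipotent w))) := by
        rw [hg]
        refine (map_mul_le_add l _ _).trans (add_le_add_right ?_ _)
        refine (map_mul_le_add l _ _).trans (add_le_add_right ?_ _)
        exact (map_mul_le_add l _ _).trans (add_le_add_left (map_mul_le_add l _ _) _)
    _ ≤ B + 4 * (k * C) := by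
        linarith [hcol t⁻¹, hrow y⁻¹, hcol v, hB h, hrow w]

theorem IsQuasiTreeSeminorm.bounded_specialLinearGroup [Module.Finite ℤ R]
    [Ring.HasFiniteQuotients R] [Group.FG (SpecialLinearGroup (Fin 2) R)] {n : ℕ} (hn : 3 ≤ n)
    {l : GroupSeminorm (SpecialLinearGroup (Fin n) R)} (hl : IsQuasiTreeSeminorm l) :
    ∃ B, ∀ g, l g ≤ B := by
  induction n, hn using Nat.le_induction with
  | base =>
    obtain ⟨C, hC⟩ := hl.exists_isTransvectionBound (by simp)
    obtain ⟨B, hB⟩ := hl.exists_stabilization_le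
    exact ⟨_, hC.le_of_stabilization_le le_rfl hB⟩
  | succ k hk ih =>
    obtain ⟨C, hC⟩ := hl.exists_isTransvectionBound (by simpa using hk.trans k.le_succ)
    obtain ⟨B, hB⟩ := ih (hl.comp stabilization)
    exact ⟨_, hC.le_of_stabilization_le (by lia) hB⟩

end Reduction

theorem sln_action_on_quasitree_bounded_orbit_general {R : Type*} [CommRing R] [Module.Finite ℤ R]
    [Ring.HasFiniteQuotients R] [Group.FG (Matrix.SpecialLinearGroup (Fin 2) R)] {n : ℕ}
    (hn : 3 ≤ n) {X V : Type*} [PseudoMetricSpace X] {T : SimpleGraph V} (hT : T.IsTree)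
    {q : X → V} {Kq Cq : ℝ} (hq : IsQuasiIsometry q T Kq Cq)
    (ρ : Matrix.SpecialLinearGroup (Fin n) R →* (X ≃ᵢ X)) (x : X) :
    Bornology.IsBounded (Set.range fun g => ρ g x) := by
  obtain ⟨l, hl, r, hr, hdist⟩ := hq.exists_isQuasiTreeSeminorm hT ρ x
  obtain ⟨B, hB⟩ := hl.bounded_specialLinearGroup hn
  refine (Metric.isBounded_closedBall (x := x) (r := r * B)).subset ?_
  rintro _ ⟨g, rfl⟩
  rw [Metric.mem_closedBall, dist_comm]
  exact (hdist g).trans (mul_le_mul_of_nonneg_left (hB g) hr)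

/-- For `n ≥ 3`, every isometric action of `SL(n, 𝓞 K)` on a metric space `X`
admitting a quasi-isometry to a simplicial tree has bounded orbits (Property (QFA)). -/
theorem sln_action_on_quasitree_bounded_orbit
    (K : Type*) [Field K] [NumberField K]
    (n : ℕ) (hn : 3 ≤ n)
    (X : Type*) [MetricSpace X]
    -- a simplicial tree `T` on vertex set `V`, with its graph metric
    (V : Type*) (T : SimpleGraph V) (hT : T.IsTree)
    -- a quasi-isometry from `X` to the tree
    (q : X → V) (Kq Cq : ℝ) (hKq : 1 ≤ Kq) (hCq : 0 ≤ Cq)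
    (hqi_lower : ∀ x₁ x₂ : X, dist x₁ x₂ / Kq - Cq ≤ (T.dist (q x₁) (q x₂) : ℝ))
    (hqi_upper : ∀ x₁ x₂ : X, (T.dist (q x₁) (q x₂) : ℝ) ≤ Kq * dist x₁ x₂ + Cq)
    (hdense : ∀ v : V, ∃ x : X, (T.dist v (q x) : ℝ) ≤ Cq)
    -- an action of `SL(n, 𝓞 K)` on `X` by isometries
    (ρ : Matrix.SpecialLinearGroup (Fin n) (𝓞 K) →* (X ≃ᵢ X))
    (x : X) :
    Bornology.IsBounded (Set.range fun g : Matrix.SpecialLinearGroup (Fin n) (𝓞 K) => ρ g x) := by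
  have : Group.FG (Matrix.SpecialLinearGroup (Fin 2) (𝓞 K)) :=
    specialLinearGroup_fin_two_ringOfIntegers_fg K
  exact sln_action_on_quasitree_bounded_orbit_general hn hT
    ⟨hKq, hCq, hqi_lower, hqi_upper, hdense⟩ ρ x
end

section
/- Let X be a metric space that is δ-hyperbolic (four-point condition) for some δ ≥ 0, and let A, B, C, D ∈ X. If the Gromov products satisfy (C,D)_A > d(A,B) and (C,D)_B > d(A,B), then |(d(B,C) − d(A,C)) − (d(B,D) − d(A,D))| ≤ 4δ. -/
/-!
If `d(A,B) ≤ (C,D)_A`, the triangle inequality makes `d(A,B) + d(C,D)` the smallest of the three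
sums of distances between opposite pairs of the quadruple `A, B, C, D`. The four-point condition
says that the two largest of these sums differ by at most `2δ`.
-/

/-- The Gromov product `(x,y)_z` of `x` and `y`, with the base point `z` as last argument. -/
noncomputable def gromovProduct {X : Type*} [PseudoMetricSpace X] (x y z : X) : ℝ :=
  (dist x z + dist y z - dist x y) / 2

/-- Gromov's four-point condition: the space `X` is `δ`-hyperbolic, stated with sums of distances
rather than Gromov products, whence the factor `2` in front of `δ`. -/
def FourPointHyperbolic (X : Type*) [PseudoMetricSpace X] (δ : ℝ) : Prop :=
  ∀ p₁ p₂ p₃ p₄ : X,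
    dist p₁ p₄ + dist p₂ p₃ ≤
      max (dist p₁ p₂ + dist p₃ p₄) (dist p₁ p₃ + dist p₂ p₄) + 2 * δ

section

variable {X : Type*} [PseudoMetricSpace X] {δ : ℝ} {a b c d : X}

theorem gromovProduct_comm (x y z : X) : gromovProduct x y z = gromovProduct y x z := by
  simp only [gromovProduct, dist_comm x y, add_comm (dist x z)]

theorem dist_add_dist_le_of_dist_le_gromovProduct (h : dist a b ≤ gromovProduct c d a) :
    dist a b + dist c d ≤ dist a c + dist b d := by
  have triangle : dist d a ≤ dist a b + dist b d := by
    simpa only [dist_comm d a] using dist_triangle a b d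
  rw [gromovProduct, dist_comm c a] at h
  linarith

namespace FourPointHyperbolic

theorem dist_add_dist_le (hX : FourPointHyperbolic X δ)
    (h : dist a b + dist c d ≤ dist a c + dist b d) :
    dist a d + dist b c ≤ dist a c + dist b d + 2 * δ := by
  simpa only [max_eq_right h] using hX a b c d

theorem abs_dist_add_dist_sub_le (hX : FourPointHyperbolic X δ)
    (hc : dist a b + dist c d ≤ dist a c + dist b d)
    (hd : dist a b + dist c d ≤ dist a d + dist b c) :
    |(dist a d + dist b c) - (dist a c + dist b d)| ≤ 2 * δ := by
  rw [dist_comm c d] at hd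
  exact abs_sub_le_iff.2
    ⟨sub_le_iff_le_add'.2 (hX.dist_add_dist_le hc), sub_le_iff_le_add'.2 (hX.dist_add_dist_le hd)⟩

end FourPointHyperbolic

theorem gromov_product_observation_general (hX : FourPointHyperbolic X δ)
    (h : dist a b ≤ gromovProduct c d a) :
    |(dist b c - dist a c) - (dist b d - dist a d)| ≤ 2 * δ := by
  have hc : dist a b + dist c d ≤ dist a c + dist b d :=
    dist_add_dist_le_of_dist_le_gromovProduct h
  have hd : dist a b + dist c d ≤ dist a d + dist b c := by
    rw [gromovProduct_comm] at h
    simpa only [dist_comm d c] using dist_add_dist_le_of_dist_le_gromovProduct h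
  calc |(dist b c - dist a c) - (dist b d - dist a d)|
      = |(dist a d + dist b c) - (dist a c + dist b d)| := by ring_nf
    _ ≤ 2 * δ := hX.abs_dist_add_dist_sub_le hc hd

end


/-- In a δ-hyperbolic metric space (four-point condition), if the Gromov
products `(C,D)_A` and `(C,D)_B` both exceed `d(A,B)`, then
`|(d(B,C) − d(A,C)) − (d(B,D) − d(A,D))| ≤ 4δ`. -/
theorem gromov_product_observation
    (X : Type*) [MetricSpace X]
    (δ : ℝ) (hδ : 0 ≤ δ)
    (hhyp : ∀ p₁ p₂ p₃ p₄ : X,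
      dist p₁ p₄ + dist p₂ p₃ ≤
        max (dist p₁ p₂ + dist p₃ p₄) (dist p₁ p₃ + dist p₂ p₄) + 2 * δ)
    (A B C D : X)
    (hA : dist A B < (dist C A + dist D A - dist C D) / 2)
    (hB : dist A B < (dist C B + dist D B - dist C D) / 2) :
    |(dist B C - dist A C) - (dist B D - dist A D)| ≤ 4 * δ := by
  have hle := gromov_product_observation_general hhyp hA.le
  linarith
end

section
/- Let G be a group generated by a finite set S, acting by isometries on a geodesic metric space X that is δ-hyperbolic (four-point condition) for some δ ≥ 0. If g ∈ G acts hyperbolically on X (for some x ∈ X the map ℤ → X, k ↦ gᵏ·x, is a quasi-isometric embedding), then g is undistorted in G: there exist constants K ≥ 1 and C ≥ 0 such that for all n ∈ ℤ, |n| ≤ K·ℓ_S(gⁿ) + C, where ℓ_S(h) denotes the word length of h, i.e. the least m such that h is a product of m elements of S ∪ S⁻¹. -/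
/-- The word length of `h` with respect to a generating set `S`: the least `m` such that
`h` is a product of `m` elements of `S ∪ S⁻¹`. -/
noncomputable def wordLength {G : Type*} [Group G] (S : Set G) (h : G) : ℕ :=
  sInf {m | ∃ l : List G, (∀ a ∈ l, a ∈ S ∨ a⁻¹ ∈ S) ∧ l.length = m ∧ l.prod = h}

/-! The displacement `h ↦ d(h x, x)` of a point is a seminorm on the group, so it is at most
`M · ℓ_S(h)`, where `M` bounds the displacements of the generators. Along the powers of `g` it grows
at least linearly in `|n|`, and hence so does `ℓ_S(gⁿ)`. -/

section WordLength

variable {G : Type*} [Group G] {S : Set G} {h : G}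

theorem exists_list_length_eq_wordLength (hh : h ∈ Subgroup.closure S) :
    ∃ l : List G, (∀ a ∈ l, a ∈ S ∨ a⁻¹ ∈ S) ∧ l.length = wordLength S h ∧ l.prod = h := by
  rw [← Subgroup.mem_toSubmonoid, Subgroup.closure_toSubmonoid] at hh
  obtain ⟨l, hl, hprod⟩ := Submonoid.exists_list_of_mem_closure hh
  have hlengths : {m | ∃ l : List G, (∀ a ∈ l, a ∈ S ∨ a⁻¹ ∈ S) ∧ l.length = m ∧
      l.prod = h}.Nonempty := ⟨l.length, l, hl, rfl, hprod⟩
  exact Nat.sInf_mem hlengths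

theorem map_le_wordLength_nsmul {F α : Type*} [AddCommMonoid α] [PartialOrder α]
    [IsOrderedAddMonoid α] [FunLike F G α] [GroupSeminormClass F G α] (p : F) {M : α}
    (hM : ∀ s ∈ S, p s ≤ M) (hh : h ∈ Subgroup.closure S) :
    p h ≤ wordLength S h • M := by
  obtain ⟨l, hl, hlength, hprod⟩ := exists_list_length_eq_wordLength hh
  have hletter : ∀ a ∈ l, p a ≤ M := fun a ha =>
    (hl a ha).elim (hM a) fun ha' => (map_inv_eq_map p a).symm.trans_le (hM a⁻¹ ha')
  calc
    p h = p l.prod := by rw [hprod]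
    _ ≤ (l.map p).sum := l.apply_prod_le_sum_map p (map_one_eq_zero p).le (map_mul_le_add p)
    _ ≤ (l.map p).length • M := List.sum_le_card_nsmul _ _ (by simpa using hletter)
    _ = wordLength S h • M := by rw [List.length_map, hlength]

end WordLength

section Displacement

variable {G X : Type*} [Group G] [PseudoMetricSpace X]

/-- The displacement `h ↦ d(h x, x)` of a point `x` under an isometric action, as a seminorm on the
acting group. -/
def displacementSeminorm (ρ : G →* (X ≃ᵢ X)) (x : X) : GroupSeminorm G where
  toFun h := dist (ρ h x) x
  map_one' := by simp
  mul_le' a b := calc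
    dist (ρ (a * b) x) x ≤ dist (ρ (a * b) x) (ρ a x) + dist (ρ a x) x := dist_triangle _ _ _
    _ = dist (ρ a x) x + dist (ρ b x) x := by
      rw [map_mul, IsometryEquiv.mul_apply, (ρ a).dist_eq, add_comm]
  inv' a := by
    rw [← (ρ a).dist_eq, map_inv, IsometryEquiv.apply_inv_self, dist_comm]

@[simp]
theorem displacementSeminorm_apply (ρ : G →* (X ≃ᵢ X)) (x : X) (h : G) :
    displacementSeminorm ρ x h = dist (ρ h x) x :=
  rfl

theorem hyperbolic_element_undistorted_general {S : Set G} {g : G} (hg : g ∈ Subgroup.closure S)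
    (ρ : G →* (X ≃ᵢ X)) (x : X) (hS : BddAbove ((fun s => dist (ρ s x) x) '' S))
    {Kq Cq : ℝ} (hKq : 0 < Kq) (hgrowth : ∀ n : ℤ, |(n : ℝ)| / Kq - Cq ≤ dist (ρ (g ^ n) x) x) :
    ∃ K C : ℝ, 1 ≤ K ∧ 0 ≤ C ∧
      ∀ n : ℤ, (|n| : ℝ) ≤ K * (wordLength S (g ^ n) : ℝ) + C := by
  obtain ⟨M, hM⟩ := hS
  have hCq : 0 ≤ Cq := by simpa using hgrowth 0
  refine ⟨max 1 (Kq * M), Kq * Cq, le_max_left _ _, by positivity, fun n => ?_⟩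
  have hlength : dist (ρ (g ^ n) x) x ≤ wordLength S (g ^ n) * M := by
    simpa using map_le_wordLength_nsmul (displacementSeminorm ρ x)
      (Set.forall_mem_image.1 hM) (zpow_mem hg n)
  calc
    |(n : ℝ)| ≤ Kq * (dist (ρ (g ^ n) x) x + Cq) :=
      (div_le_iff₀' hKq).1 (sub_le_iff_le_add.1 (hgrowth n))
    _ ≤ Kq * (wordLength S (g ^ n) * M + Cq) := by gcongr
    _ = Kq * M * wordLength S (g ^ n) + Kq * Cq := by ring
    _ ≤ max 1 (Kq * M) * wordLength S (g ^ n) + Kq * Cq := by gcongr; exact le_max_right _ _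

end Displacement

/-- If a group `G`, generated by a finite set `S`, acts by isometries on a
geodesic δ-hyperbolic space `X`, and `g ∈ G` acts hyperbolically, then `g` is undistorted:
there are `K ≥ 1`, `C ≥ 0` with `|n| ≤ K · ℓ_S(gⁿ) + C` for all `n ∈ ℤ`. -/
theorem hyperbolic_element_undistorted
    (G : Type*) [Group G] (S : Set G) (hSfin : S.Finite)
    (hSgen : Subgroup.closure S = ⊤)
    (X : Type*) [MetricSpace X]
    -- `X` is geodesic
    (hgeo : ∀ a b : X, ∃ f : ℝ → X, f 0 = a ∧ f (dist a b) = b ∧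
      ∀ s ∈ Set.Icc (0 : ℝ) (dist a b), ∀ u ∈ Set.Icc (0 : ℝ) (dist a b),
        dist (f s) (f u) = |s - u|)
    -- `X` is δ-hyperbolic (four-point condition)
    (δ : ℝ) (hδ : 0 ≤ δ)
    (hhyp : ∀ p₁ p₂ p₃ p₄ : X,
      dist p₁ p₄ + dist p₂ p₃ ≤
        max (dist p₁ p₂ + dist p₃ p₄) (dist p₁ p₃ + dist p₂ p₄) + 2 * δ)
    -- the action of `G` on `X`
    (ρ : G →* (X ≃ᵢ X))
    (g : G)
    -- `g` acts hyperbolically: for some `x`, `k ↦ gᵏ·x` is a quasi-isometric embedding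
    (hgyp : ∃ (x : X) (Kq Cq : ℝ), 1 ≤ Kq ∧ 0 ≤ Cq ∧
      ∀ k l : ℤ, dist k l / Kq - Cq ≤ dist (ρ (g ^ k) x) (ρ (g ^ l) x) ∧
        dist (ρ (g ^ k) x) (ρ (g ^ l) x) ≤ Kq * dist k l + Cq) :
    ∃ K C : ℝ, 1 ≤ K ∧ 0 ≤ C ∧
      ∀ n : ℤ, (|n| : ℝ) ≤ K * (wordLength S (g ^ n) : ℝ) + C := by
  obtain ⟨x, Kq, Cq, hKq, -, hq⟩ := hgyp
  exact hyperbolic_element_undistorted_general (hSgen ▸ Subgroup.mem_top g) ρ x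
    (hSfin.image _).bddAbove (zero_lt_one.trans_le hKq)
    fun n => by simpa [Int.norm_eq_abs] using (hq n 0).1
end

section
/- Let X be a metric space that is δ-hyperbolic (four-point condition) for some δ ≥ 0, and let J ≥ 0. Let A = {(a,b) ∈ X × X : d(a,b) ≤ J}, equipped with the pseudometric D((a₁,b₁),(a₂,b₂)) = d(a₁,a₂) + d(b₁,b₂). Then (A, D) satisfies the four-point condition with constant 2δ + 4J: for all q₁, q₂, q₃, q₄ ∈ A, D(q₁,q₄) + D(q₂,q₃) ≤ max(D(q₁,q₂) + D(q₃,q₄), D(q₁,q₃) + D(q₂,q₄)) + 2(2δ + 4J). -/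
/-!
Since `d(aᵢ, bᵢ) ≤ J`, the distances `d(aᵢ, aⱼ)` and `d(bᵢ, bⱼ)` differ by at most `2J`. Adding the
four-point inequalities for the `aᵢ` and for the `bᵢ` gives a sum of two maxima on the right. If
these are attained at different pairings, replacing that mixed sum by the better of the two unmixed
ones costs at most `4J`, since the costs of the two replacements add up to at most `8J`. The
constant is therefore `2δ + 2J`, which is at most `2δ + 4J`.
-/

theorem max_add_max_le_max_add_add_of_abs_sub_le {G : Type*} [AddCommGroup G] [LinearOrder G]
    [IsOrderedAddMonoid G] {a b c d K : G} (hac : |a - c| ≤ K) (hbd : |b - d| ≤ K) :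
    max a b + max c d ≤ max (a + c) (b + d) + K := by
  have mixed {x y z w : G} (hxz : x - z ≤ K) (hwy : w - y ≤ K) :
      x + w ≤ max (x + z) (y + w) + K := by
    by_contra! h
    rw [← max_add_add_right, max_lt_iff] at h
    have two_gaps : K + K < (x - z) + (w - y) := calc
      K + K < (x + w - (x + z)) + (x + w - (y + w)) :=
        add_lt_add (lt_sub_iff_add_lt'.mpr h.1) (lt_sub_iff_add_lt'.mpr h.2)
      _ = (x - z) + (w - y) := by abel
    exact two_gaps.not_ge (add_le_add hxz hwy)
  have hK : 0 ≤ K := (abs_nonneg _).trans hac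
  rw [abs_sub_le_iff] at hac hbd
  rcases max_choice a b with hab | hab <;> rcases max_choice c d with hcd | hcd <;> rw [hab, hcd]
  · exact le_add_of_le_of_nonneg (le_max_left _ _) hK
  · exact mixed hac.1 hbd.2
  · simpa only [max_comm] using mixed hbd.1 hac.2
  · exact le_add_of_le_of_nonneg (le_max_right _ _) hK

/-- The four-point condition of Gromov hyperbolicity, for a function `d` of two variables rather
than for a metric space, so that it applies to pullbacks and sums of distance functions. -/
def FourPointCondition {α : Type*} (δ : ℝ) (d : α → α → ℝ) : Prop :=
  ∀ p₁ p₂ p₃ p₄ : α, d p₁ p₄ + d p₂ p₃ ≤ max (d p₁ p₂ + d p₃ p₄) (d p₁ p₃ + d p₂ p₄) + 2 * δ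

namespace FourPointCondition

variable {α β : Type*} {δ δ₁ δ₂ K : ℝ} {d d₁ d₂ : α → α → ℝ}

theorem mono (h : FourPointCondition δ₁ d) (hδ : δ₁ ≤ δ₂) : FourPointCondition δ₂ d :=
  fun p₁ p₂ p₃ p₄ ↦ (h p₁ p₂ p₃ p₄).trans (by gcongr)

theorem comap (h : FourPointCondition δ d) (f : β → α) :
    FourPointCondition δ fun x y ↦ d (f x) (f y) :=
  fun p₁ p₂ p₃ p₄ ↦ h (f p₁) (f p₂) (f p₃) (f p₄)

theorem add_of_abs_sub_le (h₁ : FourPointCondition δ₁ d₁) (h₂ : FourPointCondition δ₂ d₂)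
    (hK : ∀ x y, |d₁ x y - d₂ x y| ≤ K) :
    FourPointCondition (δ₁ + δ₂ + K) fun x y ↦ d₁ x y + d₂ x y := by
  intro p₁ p₂ p₃ p₄
  have pairing_close (x y z w : α) : |(d₁ x y + d₁ z w) - (d₂ x y + d₂ z w)| ≤ 2 * K := by
    rw [add_sub_add_comm, two_mul]
    exact (abs_add_le _ _).trans (add_le_add (hK x y) (hK z w))
  have max_add_max_le := max_add_max_le_max_add_add_of_abs_sub_le
    (pairing_close p₁ p₂ p₃ p₄) (pairing_close p₁ p₃ p₂ p₄)
  simp only [add_add_add_comm (d₁ _ _) (d₂ _ _)]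
  linarith [h₁ p₁ p₂ p₃ p₄, h₂ p₁ p₂ p₃ p₄]

end FourPointCondition

theorem pairs_space_four_point_general {ι X : Type*} [PseudoMetricSpace X] {δ₁ δ₂ J : ℝ}
    {f g : ι → X} (hf : FourPointCondition δ₁ fun i j ↦ dist (f i) (f j))
    (hg : FourPointCondition δ₂ fun i j ↦ dist (g i) (g j)) (hfg : ∀ i, dist (f i) (g i) ≤ J) :
    FourPointCondition (δ₁ + δ₂ + 2 * J) fun i j ↦ dist (f i) (f j) + dist (g i) (g j) :=
  hf.add_of_abs_sub_le hg fun i j ↦ calc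
    |dist (f i) (f j) - dist (g i) (g j)| ≤ dist (f i) (g i) + dist (f j) (g j) :=
      dist_dist_dist_le _ _ _ _
    _ ≤ 2 * J := by linarith [hfg i, hfg j]

/-- Let `X` be δ-hyperbolic (four-point condition) and `J ≥ 0`. Then the
set of pairs of points of `X` at distance at most `J`, with the sum pseudometric
`D((a₁,b₁),(a₂,b₂)) = d(a₁,a₂) + d(b₁,b₂)`, satisfies the four-point condition with
constant `2δ + 4J`. -/
theorem pairs_space_four_point
    (X : Type*) [MetricSpace X]
    (δ : ℝ) (hδ : 0 ≤ δ)
    (hhyp : ∀ p₁ p₂ p₃ p₄ : X,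
      dist p₁ p₄ + dist p₂ p₃ ≤
        max (dist p₁ p₂ + dist p₃ p₄) (dist p₁ p₃ + dist p₂ p₄) + 2 * δ)
    (J : ℝ) (hJ : 0 ≤ J)
    (q₁ q₂ q₃ q₄ : X × X)
    (h₁ : dist q₁.1 q₁.2 ≤ J) (h₂ : dist q₂.1 q₂.2 ≤ J)
    (h₃ : dist q₃.1 q₃.2 ≤ J) (h₄ : dist q₄.1 q₄.2 ≤ J) :
    (dist q₁.1 q₄.1 + dist q₁.2 q₄.2) + (dist q₂.1 q₃.1 + dist q₂.2 q₃.2) ≤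
      max ((dist q₁.1 q₂.1 + dist q₁.2 q₂.2) + (dist q₃.1 q₄.1 + dist q₃.2 q₄.2))
        ((dist q₁.1 q₃.1 + dist q₁.2 q₃.2) + (dist q₂.1 q₄.1 + dist q₂.2 q₄.2)) +
      2 * (2 * δ + 4 * J) := by
  have hX : FourPointCondition δ (dist : X → X → ℝ) := hhyp
  let A := {q : X × X // dist q.1 q.2 ≤ J}
  exact (pairs_space_four_point_general (hX.comap fun q : A ↦ q.1.1) (hX.comap fun q : A ↦ q.1.2)
    fun q ↦ q.2).mono (by linarith) ⟨q₁, h₁⟩ ⟨q₂, h₂⟩ ⟨q₃, h₃⟩ ⟨q₄, h₄⟩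
end
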